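/- arXiv:1103.5519 — 2 statements merged into one kernel-verified Lean document; each statement's English description precedes it below -/
import Mathlib

section
/- Let L be an odd unimodular lattice in dimension 36 having minimum norm 3. Then the kissing number of L is at most 960, and equality holds if and only if σ(L) = 20. -/
open scoped RealInnerProductSpace

noncomputable section

/-- The norm `(x, x)` of a vector `x ∈ ℝⁿ` (squared Euclidean length). -/
def normOf {n : ℕ} (x : EuclideanSpace ℝ (Fin n)) : ℝ := ⟪x, x⟫

/-- The dual `L* = {x ∈ ℝⁿ : (x,y) ∈ ℤ for all y ∈ L}` of a set of vectors. -/
def dualSet {n : ℕ} (L : Set (EuclideanSpace ℝ (Fin n))) : Set (EuclideanSpace ℝ (Fin n)) :=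
  {x | ∀ y ∈ L, ∃ m : ℤ, ⟪x, y⟫ = (m : ℝ)}

/-- `L` is a unimodular lattice: `L = L*`. -/
def IsUnimodularLattice {n : ℕ} (L : Set (EuclideanSpace ℝ (Fin n))) : Prop :=
  L = dualSet L

/-- `L` is odd: some vector of `L` has odd (integral) norm. -/
def IsOddLattice {n : ℕ} (L : Set (EuclideanSpace ℝ (Fin n))) : Prop :=
  ∃ x ∈ L, ∃ m : ℤ, Odd m ∧ normOf x = (m : ℝ)

/-- The even sublattice `L₀ = {x ∈ L : (x,x) even}`. -/
def evenSublattice {n : ℕ} (L : Set (EuclideanSpace ℝ (Fin n))) :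
    Set (EuclideanSpace ℝ (Fin n)) :=
  {x | x ∈ L ∧ ∃ m : ℤ, normOf x = 2 * (m : ℝ)}

/-- The shadow `S(L) = L₀* \ L`. -/
def shadow {n : ℕ} (L : Set (EuclideanSpace ℝ (Fin n))) : Set (EuclideanSpace ℝ (Fin n)) :=
  dualSet (evenSublattice L) \ L

/-- `L` has minimum norm `r`: `r` is the least norm among nonzero vectors of `L`. -/
def HasMinNorm {n : ℕ} (L : Set (EuclideanSpace ℝ (Fin n))) (r : ℝ) : Prop :=
  IsLeast {s : ℝ | ∃ x ∈ L, x ≠ 0 ∧ normOf x = s} r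

/-- The shadow `S(L)` has minimum norm `r`. -/
def HasShadowMinNorm {n : ℕ} (L : Set (EuclideanSpace ℝ (Fin n))) (r : ℝ) : Prop :=
  IsLeast {s : ℝ | ∃ x ∈ shadow L, normOf x = s} r

/-- `σ(L) = r`, i.e. `4 · min(S(L)) = r`. -/
def HasSigma {n : ℕ} (L : Set (EuclideanSpace ℝ (Fin n))) (r : ℝ) : Prop :=
  ∃ s : ℝ, HasShadowMinNorm L s ∧ r = 4 * s

/-- The number of vectors of norm `r` in `L`; when `L` has minimum norm `r`,
this is the kissing number of `L`. -/
def numVecsOfNorm {n : ℕ} (L : Set (EuclideanSpace ℝ (Fin n))) (r : ℝ) : ℕ :=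
  Set.ncard {x ∈ L | normOf x = r}

section part1
open UpperHalfPlane ModularForm ModularFormClass MatrixGroups EisensteinSeries

lemma E4_c2 : (qExpansion 1 E₄).coeff 2 = 2160 := by
  have h : (ArithmeticFunction.sigma 3) 2 = 9 := by decide +kernel
  norm_num [E_qExpansion_coeff _ ⟨2, rfl⟩, show bernoulli 4 = -1 / 30 by decide +kernel, h]

lemma E6_c2 : (qExpansion 1 E₆).coeff 2 = -16632 := by
  have h : (ArithmeticFunction.sigma 5) 2 = 33 := by decide +kernel
  norm_num [E_qExpansion_coeff _ ⟨3, rfl⟩, show bernoulli 6 = 1 / 42 by decide +kernel, h]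

/-- The form `E₄² E₆` of weight 14. -/
def E14' : ModularForm 𝒮ℒ 14 := ModularForm.mcast (by norm_num) ((E₄.mul E₄).mul E₆)

lemma E14'_q : qExpansion 1 E14' = qExpansion 1 E₄ * qExpansion 1 E₄ * qExpansion 1 E₆ := by
  simp only [E14', coe_mcast]
  rw [ModularForm.qExpansion_mul one_pos one_mem_strictPeriods_SL,
    ModularForm.qExpansion_mul one_pos one_mem_strictPeriods_SL]

lemma disc_c2 : (qExpansion 1 discriminant).coeff 2 = -24 := by
  have h : ∀ z, (1728 : ℂ) * discriminant z = E₄ z ^ 3 - E₆ z ^ 2 := fun z ↦ by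
    rw [discriminant_eq_E₄_cube_sub_E₆_sq]; ring
  have hf : ((1728 : ℂ) • CuspForm.discriminant : ℍ → ℂ) =
      (((E₄.mul E₄).mul E₄ : ModularForm 𝒮ℒ _) : ℍ → ℂ) -
      ((ModularForm.mcast (by norm_num) (E₆.mul E₆) : ModularForm 𝒮ℒ (4+4+4)) : ℍ → ℂ) := by
    funext z
    have := h z
    simp only [Pi.smul_apply, smul_eq_mul, Pi.sub_apply]
    change (1728 : ℂ) * discriminant z = E₄ z * E₄ z * E₄ z - E₆ z * E₆ z
    rw [this]; ring
  have hq := ModularForm.qExpansion_smul one_pos one_mem_strictPeriods_SL (1728 : ℂ)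
      CuspForm.discriminant
  rw [hf, ModularForm.qExpansion_sub one_pos one_mem_strictPeriods_SL] at hq
  simp only [coe_mcast, ModularForm.qExpansion_mul one_pos one_mem_strictPeriods_SL] at hq
  have h2 := congr_arg (·.coeff 2) hq
  have e40 := E_qExpansion_coeff_zero (k := 4) (by norm_num) ⟨2, rfl⟩
  have e60 := E_qExpansion_coeff_zero (k := 6) (by norm_num) ⟨3, rfl⟩
  have := E4_c2
  have := E6_c2
  have := E₄_qExpansion_coeff_one
  have := E₆_qExpansion_coeff_one
  rw [CuspForm.coe_discriminant] at h2
  simp only [map_sub, PowerSeries.coeff_mul, Finset.Nat.antidiagonal_succ, PowerSeries.coeff_smul, smul_eq_mul] at h2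
  simp [-PowerSeries.coeff_zero_eq_constantCoeff, Finset.Nat.antidiagonal_succ, *] at h2
  linear_combination -h2 / 1728

lemma wt14 (g : ModularForm 𝒮ℒ 14) :
    (qExpansion 1 g).coeff 1 = -24 * (qExpansion 1 g).coeff 0 := by
  have hr : Module.rank ℂ (ModularForm 𝒮ℒ 14) = 1 := by
    have := dimension_level_one 14 (by decide)
    simpa [Nat.ModEq] using this
  have e40 := E_qExpansion_coeff_zero (k := 4) (by norm_num) ⟨2, rfl⟩
  have e60 := E_qExpansion_coeff_zero (k := 6) (by norm_num) ⟨3, rfl⟩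
  have e41 := E₄_qExpansion_coeff_one
  have e61 := E₆_qExpansion_coeff_one
  have h0 : (qExpansion 1 E14').coeff 0 = 1 := by
    rw [E14'_q]
    simp [-PowerSeries.coeff_zero_eq_constantCoeff, PowerSeries.coeff_mul, *]
  have h1 : (qExpansion 1 E14').coeff 1 = -24 := by
    rw [E14'_q]
    simp [-PowerSeries.coeff_zero_eq_constantCoeff, PowerSeries.coeff_mul, Finset.Nat.antidiagonal_succ, *]
    norm_num
  have hne : E14' ≠ 0 := by
    intro h
    rw [h] at h0
    simp [UpperHalfPlane.qExpansion_zero] at h0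
  obtain ⟨c, hc⟩ := (finrank_eq_one_iff_of_nonzero' E14' hne).mp
      (Module.rank_eq_one_iff_finrank_eq_one.mp hr) g
  have hq : c • qExpansion 1 E14' = qExpansion 1 g := by
    rw [← ModularForm.qExpansion_smul one_pos one_mem_strictPeriods_SL c E14', ← hc]; rfl
  rw [← hq]
  simp only [PowerSeries.coeff_smul, h0, h1, smul_eq_mul]
  ring

lemma disc_c0 : (qExpansion 1 discriminant).coeff 0 = 0 := by
  simpa using CuspFormClass.qExpansion_coeff_zero CuspForm.discriminant one_pos
    one_mem_strictPeriods_SL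

lemma wt26 (f : ModularForm 𝒮ℒ 26) (h0 : (qExpansion 1 f).coeff 0 = 0) :
    (qExpansion 1 f).coeff 2 = -48 * (qExpansion 1 f).coeff 1 := by
  rw [qExpansion_eq_qExpansion_discriminant_mul f h0]
  have h := wt14 (CuspForm.discriminantEquiv (toCuspForm f h0))
  have d0 := disc_c0
  have d1 := discriminant_qExpansion_coeff_one
  have d2 := disc_c2
  simp [-PowerSeries.coeff_zero_eq_constantCoeff, PowerSeries.coeff_mul, Finset.Nat.antidiagonal_succ, *]
  ring

lemma wt38 (f : ModularForm 𝒮ℒ 38) (h0 : (qExpansion 1 f).coeff 0 = 0)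
    (h1 : (qExpansion 1 f).coeff 1 = 0) :
    (qExpansion 1 f).coeff 3 = -72 * (qExpansion 1 f).coeff 2 := by
  have hf := qExpansion_eq_qExpansion_discriminant_mul f h0
  have h := wt26 (CuspForm.discriminantEquiv (toCuspForm f h0))
  have d0 := disc_c0
  have d1 := discriminant_qExpansion_coeff_one
  have d2 := disc_c2
  set g := qExpansion 1 (CuspForm.discriminantEquiv (toCuspForm f h0)) with hg
  rw [hf] at h1 ⊢
  have g0 : g.coeff 0 = 0 := by
    simpa [-PowerSeries.coeff_zero_eq_constantCoeff, PowerSeries.coeff_mul, Finset.Nat.antidiagonal_succ, *] using h1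
  have h' : g.coeff 2 = -48 * g.coeff 1 := h g0
  simp [-PowerSeries.coeff_zero_eq_constantCoeff, PowerSeries.coeff_mul, Finset.Nat.antidiagonal_succ, d0, d1, d2, g0, h']
  ring

end part1

section part2
open UpperHalfPlane ModularForm ModularFormClass MatrixGroups EisensteinSeries
open scoped Manifold

/-- `f` is given by the power series `p` in `exp (π i τ)`. -/
def HasQ (f : ℍ → ℂ) (p : PowerSeries ℂ) : Prop :=
  ∀ τ : ℍ, HasSum (fun m : ℕ ↦ p.coeff m • Function.Periodic.qParam 2 τ ^ m) (f τ)

namespace HasQ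
variable {f g : ℍ → ℂ} {p r : PowerSeries ℂ}

lemma add (hf : HasQ f p) (hg : HasQ g r) : HasQ (f + g) (p + r) := fun τ ↦ by
  simpa [add_mul] using (hf τ).add (hg τ)

lemma sub (hf : HasQ f p) (hg : HasQ g r) : HasQ (f - g) (p - r) := fun τ ↦ by
  simpa [sub_mul] using (hf τ).sub (hg τ)

lemma mul (hf : HasQ f p) (hg : HasQ g r) : HasQ (f * g) (p * r) := fun τ ↦ by
  have h1 := (hf τ).summable.norm
  have h2 := (hg τ).summable.norm
  have h := (summable_norm_sum_mul_antidiagonal_of_summable_norm h1 h2).of_norm.hasSum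
  rw [← tsum_mul_tsum_eq_tsum_sum_antidiagonal_of_summable_norm h1 h2, (hf τ).tsum_eq,
    (hg τ).tsum_eq] at h
  have e : (fun m : ℕ ↦ (p * r).coeff m • Function.Periodic.qParam 2 (τ : ℂ) ^ m) =
      fun n ↦ ∑ kl ∈ Finset.HasAntidiagonal.antidiagonal n,
        (p.coeff kl.1 • Function.Periodic.qParam 2 (τ : ℂ) ^ kl.1) *
          (r.coeff kl.2 • Function.Periodic.qParam 2 (τ : ℂ) ^ kl.2) := ?_
  · rw [e]; exact h
  funext m
  rw [PowerSeries.coeff_mul, smul_eq_mul, Finset.sum_mul]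
  refine Finset.sum_congr rfl fun x hx ↦ ?_
  rw [Finset.HasAntidiagonal.mem_antidiagonal] at hx
  simp only [smul_eq_mul, ← hx, pow_add]
  ring

lemma one : HasQ 1 1 := fun τ ↦ by
  have := hasSum_single (f := fun m : ℕ ↦ (1 : PowerSeries ℂ).coeff m • Function.Periodic.qParam 2 τ ^ m) 0
    (fun m hm ↦ by simp [PowerSeries.coeff_one, hm])
  simpa using this

lemma pow (hf : HasQ f p) (n : ℕ) : HasQ (f ^ n) (p ^ n) := by
  induction n with
  | zero => simpa using one
  | succ n ih => simpa [pow_succ] using ih.mul hf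

lemma congr (hf : HasQ f p) (h : ∀ τ, g τ = f τ) : HasQ g p := by
  rwa [show g = f from funext h]

lemma qp_lt (τ : ℍ) : ‖Function.Periodic.qParam 2 (τ : ℂ)‖ < 1 :=
  Function.Periodic.norm_qParam_lt_one two_pos τ.im_pos

lemma exists_tau {q : ℂ} (hq : ‖q‖ < 1) (h0 : q ≠ 0) :
    ∃ τ : ℍ, Function.Periodic.qParam 2 (τ : ℂ) = q :=
  ⟨⟨Function.Periodic.invQParam 2 q,
    Function.Periodic.im_invQParam_pos_of_norm_lt_one two_pos hq h0⟩,
    Function.Periodic.qParam_right_inv two_ne_zero h0⟩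

lemma hasF (hf : HasQ f p) :
    HasFPowerSeriesOnBall (fun q : ℂ ↦ ∑' m, p.coeff m * q ^ m) (.ofScalars ℂ fun m ↦ p.coeff m) 0 1 := by
  have key : ∀ q : ℂ, ‖q‖ < 1 → Summable (fun m ↦ p.coeff m * q ^ m) := by
    intro q hq
    rcases eq_or_ne q 0 with rfl | h0
    · refine summable_of_ne_finset_zero (s := {0}) fun m hm ↦ ?_
      simp at hm
      simp [hm]
    · obtain ⟨τ, rfl⟩ := exists_tau hq h0
      exact (hf τ).summable
  constructor
  · refine le_of_forall_lt_imp_le_of_dense fun r hr ↦ ?_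
    lift r to NNReal using hr.ne_top
    apply FormalMultilinearSeries.le_radius_of_summable
    have h1 : r < 1 := by simpa using hr
    have := (key (r : ℝ) (by simpa using h1)).norm
    simpa [smul_eq_mul, norm_mul, mul_comm, mul_left_comm, mul_assoc] using this
  · simp
  · intro y hy
    have hy' : ‖y‖ < 1 := by
      rw [← ENNReal.coe_one, Metric.eball_coe, NNReal.coe_one, mem_ball_zero_iff] at hy
      exact hy
    simpa [mul_comm] using (key y hy').hasSum

lemma mdiff (hf : HasQ f p) : MDiff f := by
  rw [UpperHalfPlane.mdifferentiable_iff]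
  have hd := hf.hasF.differentiableOn
  have hm : Set.MapsTo (Function.Periodic.qParam 2) {z : ℂ | 0 < z.im} (Metric.eball (0:ℂ) 1) := by
    intro z hz
    rw [← ENNReal.coe_one, Metric.eball_coe, NNReal.coe_one, mem_ball_zero_iff]
    exact Function.Periodic.norm_qParam_lt_one two_pos hz
  have hq : DifferentiableOn ℂ (Function.Periodic.qParam 2) {z : ℂ | 0 < z.im} :=
    (Function.Periodic.differentiable_qParam (h := 2)).differentiableOn
  refine (hd.comp hq hm).congr fun z hz ↦ ?_
  have hz' : 0 < z.im := hz
  simp only [Function.comp, ofComplex_apply_of_im_pos hz']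
  exact (hf ⟨z, hz'⟩).tsum_eq.symm

lemma bdd (hf : HasQ f p) : IsBoundedAtImInfty f :=
  isBoundedAtImInfty_of_hasSum_qExpansion two_pos hf

lemma qparam_two_add (z : ℂ) : Function.Periodic.qParam 2 (z + 1) = - Function.Periodic.qParam 2 z := by
  simp only [Function.Periodic.qParam]
  rw [show 2 * (Real.pi : ℂ) * Complex.I * (z + 1) / (2:ℝ) = 2 * Real.pi * Complex.I * z / (2:ℝ) + Real.pi * Complex.I by
    push_cast; ring, Complex.exp_add, Complex.exp_pi_mul_I]
  ring

lemma per (hf : HasQ f p) : Function.Periodic (f ∘ ofComplex) (2 : ℝ) := by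
  intro w
  by_cases hw : 0 < w.im
  · have h2 : 0 < (w + (2 : ℝ)).im := by simpa using hw
    simp only [Function.comp, ofComplex_apply_of_im_pos hw, ofComplex_apply_of_im_pos h2]
    refine (hf ⟨_, h2⟩).unique ?_
    have := hf ⟨w, hw⟩
    have e : Function.Periodic.qParam 2 (w + (2 : ℝ)) = Function.Periodic.qParam 2 w := by
      rw [show w + (2 : ℝ) = (w + 1) + 1 by push_cast; ring, qparam_two_add, qparam_two_add, neg_neg]
    simp only [e]
    exact this
  · have h2 : (w + (2 : ℝ)).im ≤ 0 := by simpa using hw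
    simp only [Function.comp, ofComplex_apply_of_im_nonpos h2, ofComplex_apply_of_im_nonpos (not_lt.mp hw)]

lemma unique (hf : HasQ f p) (hf' : HasQ f r) : p = r := by
  have ha := analyticAt_cuspFunction_zero two_pos hf.per hf.mdiff hf.bdd
  have h1 := (hasFPowerSeriesOnBall_cuspFunction two_pos ha (c := fun m ↦ p.coeff m) hf).hasFPowerSeriesAt
  have h2 := (hasFPowerSeriesOnBall_cuspFunction two_pos ha (c := fun m ↦ r.coeff m) hf').hasFPowerSeriesAt
  ext m
  simpa using congr_arg (FormalMultilinearSeries.coeff · m) (h1.eq_formalMultilinearSeries h2)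

/-- A function with a `q`-expansion and the right behaviour under `S`, `T` is a modular form. -/
def toMF (hf : HasQ f p) (k : ℤ) (hS : ∀ τ : ℍ, f (ModularGroup.S • τ) = (τ : ℂ) ^ k * f τ)
    (hT : ∀ τ : ℍ, f (ModularGroup.T • τ) = f τ) : ModularForm 𝒮ℒ k :=
  have hS' : f ∣[k] ModularGroup.S = f := by
    ext τ
    rw [SL_slash_apply, hS, ModularGroup.denom_S, zpow_neg, mul_comm, ← mul_assoc,
      inv_mul_cancel₀ (zpow_ne_zero _ τ.ne_zero), one_mul]
  have hT' : f ∣[k] ModularGroup.T = f := by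
    ext τ
    rw [SL_slash_apply, hT, ModularGroup.denom_apply]
    simp [ModularGroup.T]
  have hinv := SlashInvariantForm.slash_action_generators_SL2Z hS' hT'
  { toFun := f
    slash_action_eq' := by
      rintro _ ⟨γ, rfl⟩
      exact hinv γ
    holo' := hf.mdiff
    bdd_at_cusps' := by
      intro c hc
      rw [Subgroup.IsArithmetic.isCusp_iff_isCusp_SL2Z] at hc
      rw [OnePoint.isBoundedAt_iff_forall_SL2Z hc]
      intro γ _
      have := hinv γ
      rw [this]
      exact hf.bdd }

lemma toMF_coeff (hf : HasQ f p) (k : ℤ) (hS : ∀ τ : ℍ, f (ModularGroup.S • τ) = (τ : ℂ) ^ k * f τ)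
    (hT : ∀ τ : ℍ, f (ModularGroup.T • τ) = f τ) (m : ℕ) :
    (qExpansion 1 (hf.toMF k hS hT)).coeff m = p.coeff (2 * m) := by
  set F := hf.toMF k hS hT
  set c := qExpansion 1 F
  have hc : HasQ f (PowerSeries.mk fun j ↦ if Even j then c.coeff (j / 2) else 0) := by
    intro τ
    have h1 : HasSum (fun m ↦ c.coeff m * Function.Periodic.qParam 1 τ ^ m) (f τ) :=
      ModularForm.hasSum_qExpansion F one_pos one_mem_strictPeriods_SL τ
    have hinj : Function.Injective (fun m : ℕ ↦ 2 * m) := fun a b h ↦ by simpa using h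
    rw [← hinj.hasSum_iff]
    · convert h1 using 2 with j
      have e : Function.Periodic.qParam 1 (τ : ℂ) = Function.Periodic.qParam 2 (τ : ℂ) ^ 2 := by
        simp only [Function.Periodic.qParam, ← Complex.exp_nat_mul]
        congr 1; push_cast; ring
      simp [e, pow_mul]
    · intro x hx
      have : ¬ Even x := by
        rintro ⟨y, rfl⟩
        exact hx ⟨y, by simp; ring⟩
      simp [this]
  rw [hf.unique hc]
  simp

end HasQ

end part2

section part3
open UpperHalfPlane ModularForm ModularFormClass MatrixGroups EisensteinSeries

/-- The nome `exp (π i τ)`. -/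
def xx (τ : ℍ) : ℂ := Function.Periodic.qParam 2 (τ : ℂ)

lemma xx_eq (τ : ℍ) : xx τ = Complex.exp (Real.pi * Complex.I * τ) := by
  simp only [xx, Function.Periodic.qParam]; congr 1; push_cast; ring

lemma xx_ne (τ : ℍ) : xx τ ≠ 0 := by rw [xx_eq]; exact Complex.exp_ne_zero _

lemma xx_T (τ : ℍ) : xx (ModularGroup.T • τ) = - xx τ := by
  rw [xx, UpperHalfPlane.modular_T_smul, UpperHalfPlane.coe_vadd, add_comm, Complex.ofReal_one, HasQ.qparam_two_add, xx]

lemma HasQ.T {f : ℍ → ℂ} {p : PowerSeries ℂ} (hf : HasQ f p) :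
    HasQ (fun τ ↦ f (ModularGroup.T • τ)) (PowerSeries.mk fun m ↦ (-1) ^ m * p.coeff m) := by
  intro τ
  have h := hf (ModularGroup.T • τ)
  have e : Function.Periodic.qParam 2 ((ModularGroup.T • τ : ℍ) : ℂ) = - Function.Periodic.qParam 2 (τ : ℂ) := xx_T τ
  rw [e] at h
  refine h.congr_fun ?_ |> fun h ↦ h
  intro m
  rw [PowerSeries.coeff_mk, neg_pow]
  simp only [smul_eq_mul]; ring

section fiber
variable {ι : Type*} {N : ι → ℕ} {f : ℍ → ℂ}

lemma fiber_finite (h : ∀ τ : ℍ, HasSum (fun i ↦ xx τ ^ N i) (f τ)) (m : ℕ) :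
    Finite {i // N i = m} := by
  have hs := (h UpperHalfPlane.I).summable.subtype {i | N i = m}
  have h2 : Summable (fun _ : {i // N i = m} ↦ xx UpperHalfPlane.I ^ m) := by
    refine hs.congr fun i ↦ ?_
    have : N i.1 = m := i.2
    simp only [Function.comp, this]
  have h3 := h2.norm
  exact Finite.of_summable_const (norm_pos_iff.mpr (pow_ne_zero m (xx_ne UpperHalfPlane.I))) h3

lemma HasQ.of_fiber (h : ∀ τ : ℍ, HasSum (fun i ↦ xx τ ^ N i) (f τ)) :
    HasQ f (PowerSeries.mk fun m ↦ (Nat.card {i // N i = m} : ℂ)) := by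
  intro τ
  have h1 := (Equiv.sigmaFiberEquiv N).hasSum_iff.mpr (h τ)
  refine h1.sigma fun m ↦ ?_
  have := fiber_finite h m
  have := Fintype.ofFinite {i // N i = m}
  have e := hasSum_fintype (fun i : {i // N i = m} ↦ xx τ ^ m)
  simp only [Finset.sum_const, Finset.card_univ] at e
  rw [PowerSeries.coeff_mk, Nat.card_eq_fintype_card]
  convert e using 1
  · ext ⟨i, hi⟩
    simp [hi]
  · simp [xx]

end fiber

/-- A triple of functions transforming like `(θ₃⁴, θ₄⁴, θ₂⁴)`, in weight `k`. -/
structure IsTriple (k : ℕ) (P Q R : ℍ → ℂ) : Prop where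
  PT : ∀ τ, P (ModularGroup.T • τ) = Q τ
  QT : ∀ τ, Q (ModularGroup.T • τ) = P τ
  RT : ∀ τ, R (ModularGroup.T • τ) = - R τ
  PS : ∀ τ : ℍ, P (ModularGroup.S • τ) = - (τ : ℂ) ^ k * P τ
  QS : ∀ τ : ℍ, Q (ModularGroup.S • τ) = - (τ : ℂ) ^ k * R τ
  RS : ∀ τ : ℍ, R (ModularGroup.S • τ) = - (τ : ℂ) ^ k * Q τ

def th3 (τ : ℍ) : ℂ := jacobiTheta₂ 0 τ
def th4 (τ : ℍ) : ℂ := jacobiTheta₂ (1 / 2) τ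
def th2 (τ : ℍ) : ℂ := jacobiTheta₂ (τ / 2) τ
def tA (τ : ℍ) : ℂ := th3 τ ^ 4
def tB (τ : ℍ) : ℂ := th4 τ ^ 4
def tC (τ : ℍ) : ℂ := xx τ * th2 τ ^ 4

lemma th3_sum (τ : ℍ) : HasSum (fun n : ℤ ↦ xx τ ^ (n.natAbs ^ 2)) (th3 τ) := by
  have h := hasSum_jacobiTheta₂_term 0 τ.im_pos
  refine h.congr_fun ?_ |> fun h ↦ h
  intro n
  rw [jacobiTheta₂_term, xx_eq, ← Complex.exp_nat_mul]
  congr 1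
  have : ((n.natAbs ^ 2 : ℕ) : ℂ) = (n : ℂ) ^ 2 := by
    have : ((n.natAbs ^ 2 : ℕ) : ℤ) = n ^ 2 := by push_cast; exact Int.natAbs_sq n ▸ (by simp)
    rw [← Int.cast_natCast, this]; push_cast; ring
  rw [this]; ring

lemma th2_sum (τ : ℍ) : HasSum (fun n : ℤ ↦ xx τ ^ ((n * (n + 1)).toNat)) (th2 τ) := by
  have h := hasSum_jacobiTheta₂_term ((τ : ℂ) / 2) τ.im_pos
  refine h.congr_fun ?_ |> fun h ↦ h
  intro n
  rw [jacobiTheta₂_term, xx_eq, ← Complex.exp_nat_mul]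
  congr 1
  have h0 : 0 ≤ n * (n + 1) := by nlinarith [mul_self_nonneg (2 * n + 1)]
  have : (((n * (n + 1)).toNat : ℕ) : ℂ) = (n : ℂ) * (n + 1) := by
    have : (((n * (n + 1)).toNat : ℕ) : ℤ) = n * (n + 1) := Int.toNat_of_nonneg h0
    exact_mod_cast congrArg (Int.cast : ℤ → ℂ) this
  rw [this]; ring

lemma th3_T (τ : ℍ) : th3 (ModularGroup.T • τ) = th4 τ := by
  refine (th3_sum _).unique ?_
  have h := hasSum_jacobiTheta₂_term (1 / 2) τ.im_pos
  refine h.congr_fun ?_ |> fun h ↦ h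
  intro n
  have e1 : ((n.natAbs ^ 2 : ℕ) : ℂ) = (n : ℂ) ^ 2 := by
    have : ((n.natAbs ^ 2 : ℕ) : ℤ) = n ^ 2 := by push_cast; exact Int.natAbs_sq n ▸ (by simp)
    rw [← Int.cast_natCast, this]; push_cast; ring
  have e2 : Complex.exp (2 * Real.pi * Complex.I * n * (1 / 2)) = (-1) ^ (n.natAbs ^ 2) := by
    rw [show (2 * Real.pi * Complex.I * n * (1 / 2) : ℂ) = n * (Real.pi * Complex.I) by ring,
      Complex.exp_int_mul, Complex.exp_pi_mul_I]
    rcases Int.even_or_odd n with hn | hn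
    · rw [hn.neg_one_zpow, Even.neg_one_pow]
      exact (Int.natAbs_even.mpr hn).pow_of_ne_zero (by norm_num)
    · rw [hn.neg_one_zpow, Odd.neg_one_pow]
      exact (Int.natAbs_odd.mpr hn).pow
  rw [jacobiTheta₂_term, Complex.exp_add, e2, xx_T, neg_pow, xx_eq, ← Complex.exp_nat_mul]
  congr 2
  rw [e1]; ring

lemma th2_T (τ : ℍ) : th2 (ModularGroup.T • τ) = th2 τ := by
  refine (th2_sum _).unique ?_
  refine (th2_sum τ).congr_fun ?_ |> fun h ↦ h
  intro n
  rw [xx_T, Even.neg_pow]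
  have h0 : 0 ≤ n * (n + 1) := by nlinarith [mul_self_nonneg (2 * n + 1)]
  have := Int.even_mul_succ_self n
  rw [← Int.toNat_of_nonneg h0] at this
  exact_mod_cast this

lemma jt4 (z : ℂ) (τ : ℍ) : jacobiTheta₂ z τ ^ 4 =
    - (1 / (τ : ℂ) ^ 2) * Complex.exp (-4 * Real.pi * Complex.I * z ^ 2 / τ) * jacobiTheta₂ (z / τ) (-1 / τ) ^ 4 := by
  rw [jacobiTheta₂_functional_equation, mul_pow, mul_pow, div_pow, one_pow]
  have h0 : ((-Complex.I * τ : ℂ)) ≠ 0 := mul_ne_zero (by simp) τ.ne_zero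
  have : ((-Complex.I * τ : ℂ) ^ (1 / 2 : ℂ)) ^ 4 = - (τ : ℂ) ^ 2 := by
    rw [← Complex.cpow_nat_mul]
    norm_num
    rw [mul_pow, Complex.I_sq]; ring
  rw [this, ← Complex.exp_nat_mul, one_div_neg_eq_neg_one_div]
  congr 3
  push_cast; ring

lemma S_coe (τ : ℍ) : ((ModularGroup.S • τ : ℍ) : ℂ) = -1 / τ := by
  rw [UpperHalfPlane.modular_S_smul]; simp [neg_div, inv_neg]

lemma S_S (τ : ℍ) : ModularGroup.S • ModularGroup.S • τ = τ := by
  ext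
  rw [S_coe, S_coe]
  have := τ.ne_zero
  field_simp

lemma tA_S (τ : ℍ) : tA (ModularGroup.S • τ) = - (τ : ℂ) ^ 2 * tA τ := by
  have h := jt4 0 τ
  simp only [tA, th3, S_coe]
  rw [h]
  have := τ.ne_zero
  simp
  field_simp

lemma tB_S (τ : ℍ) : tB (ModularGroup.S • τ) = - (τ : ℂ) ^ 2 * tC τ := by
  have h := jt4 (1 / 2) (ModularGroup.S • τ)
  have h0 := τ.ne_zero
  simp only [tB, th4, tC, th2]
  rw [h, S_coe]
  rw [show (1 / 2 / (-1 / (τ : ℂ))) = - (τ / 2 : ℂ) by field_simp, jacobiTheta₂_neg_left,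
    show -1 / (-1 / (τ : ℂ)) = τ by field_simp, xx_eq,
    show -4 * Real.pi * Complex.I * (1 / 2 : ℂ) ^ 2 / (-1 / (τ : ℂ)) = Real.pi * Complex.I * τ by field_simp; ring]
  field_simp

lemma abc : IsTriple 2 tA tB tC where
  PT τ := by simp only [tA, tB, th3_T]
  QT τ := by
    simp only [tA, tB, ← th3_T]
    congr 1
    refine (th3_sum _).unique ?_
    simpa only [xx_T, neg_neg] using th3_sum τ
  RT τ := by simp only [tC, xx_T, th2_T]; ring
  PS := tA_S
  QS := tB_S
  RS τ := by
    have h := tB_S (ModularGroup.S • τ)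
    rw [S_S, S_coe] at h
    rw [h]
    have := τ.ne_zero
    field_simp

end part3

section part4
open UpperHalfPlane ModularForm ModularFormClass MatrixGroups EisensteinSeries

lemma natCard_eq {ι : Type*} (p : ι → Prop) (s : Set ι) (h : ∀ i, p i ↔ i ∈ s) :
    Nat.card {i // p i} = s.ncard := by
  rw [← Nat.card_coe_set_eq]
  exact Nat.card_congr (Equiv.subtypeEquivRight h)

lemma sq3 (n : ℤ) : n.natAbs ^ 2 = 0 ↔ n = 0 := by simp

lemma th3_q : ∃ D, HasQ th3 (1 + 2 * PowerSeries.X + PowerSeries.X ^ 4 * D) := by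
  have h := HasQ.of_fiber th3_sum
  set p := PowerSeries.mk fun m ↦ (Nat.card {n : ℤ // n.natAbs ^ 2 = m} : ℂ) with hp
  have c0 : p.coeff 0 = 1 := by
    rw [hp, PowerSeries.coeff_mk, natCard_eq _ {0} (by simp)]; simp
  have c1 : p.coeff 1 = 2 := by
    rw [hp, PowerSeries.coeff_mk, natCard_eq _ {1, -1} (by intro n; simp; omega),
      Set.ncard_pair (by norm_num)]; norm_num
  have c23 : ∀ m, m = 2 ∨ m = 3 → p.coeff m = 0 := by
    intro m hm
    rw [hp, PowerSeries.coeff_mk, natCard_eq _ ∅, Set.ncard_empty, Nat.cast_zero]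
    intro n
    simp only [Set.mem_empty_iff_false, iff_false]
    intro h
    have : n.natAbs < 2 := by
      have h4 : n.natAbs ^ 2 < 2 ^ 2 := by omega
      exact lt_of_pow_lt_pow_left₀ 2 (by norm_num) h4
    interval_cases n.natAbs <;> omega
  have : PowerSeries.X ^ 4 ∣ p - (1 + 2 * PowerSeries.X) := by
    rw [PowerSeries.X_pow_dvd_iff]
    intro m hm
    rw [show (2 : PowerSeries ℂ) = PowerSeries.C 2 from (map_ofNat _ 2).symm]
    interval_cases m
    · rw [map_sub, c0]; simp
    · simp [c1, PowerSeries.coeff_one]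
    · simp [c23 2 (.inl rfl), PowerSeries.coeff_one, PowerSeries.coeff_X]
    · simp [c23 3 (.inr rfl), PowerSeries.coeff_one, PowerSeries.coeff_X]
  obtain ⟨D, hD⟩ := this
  exact ⟨D, by rw [← hD]; convert h using 1; ring⟩

lemma th2_q : ∃ D, HasQ th2 (2 + 2 * PowerSeries.X ^ 2 + PowerSeries.X ^ 3 * D) := by
  have h := HasQ.of_fiber th2_sum
  set p := PowerSeries.mk fun m ↦ (Nat.card {n : ℤ // (n * (n + 1)).toNat = m} : ℂ) with hp
  have nn : ∀ n : ℤ, 0 ≤ n * (n + 1) := fun n ↦ by nlinarith [mul_self_nonneg (2 * n + 1)]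
  have e : ∀ (n : ℤ) (m : ℕ), (n * (n + 1)).toNat = m ↔ n * (n + 1) = m := by
    intro n m; have := nn n; omega
  have b : ∀ (n : ℤ), n * (n + 1) ≤ 2 → n = 0 ∨ n = -1 ∨ n = 1 ∨ n = -2 := by
    intro n hn
    have h1 : n ≤ 1 := by nlinarith
    have h2 : -2 ≤ n := by nlinarith
    interval_cases n <;> simp
  have c0 : p.coeff 0 = 2 := by
    rw [hp, PowerSeries.coeff_mk, natCard_eq _ {0, -1}, Set.ncard_pair (by norm_num)]
    · norm_num
    intro n
    rw [e]
    constructor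
    · intro h; rcases b n (by omega) with rfl | rfl | rfl | rfl <;> simp_all
    · rintro (rfl | rfl) <;> simp
  have c1 : p.coeff 1 = 0 := by
    rw [hp, PowerSeries.coeff_mk, natCard_eq _ ∅]
    · simp
    intro n
    rw [e]
    constructor
    · intro h; rcases b n (by omega) with rfl | rfl | rfl | rfl <;> simp_all
    · simp
  have c2 : p.coeff 2 = 2 := by
    rw [hp, PowerSeries.coeff_mk, natCard_eq _ {1, -2}, Set.ncard_pair (by norm_num)]
    · norm_num
    intro n
    rw [e]
    constructor
    · intro h; rcases b n (by omega) with rfl | rfl | rfl | rfl <;> simp_all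
    · rintro (rfl | rfl) <;> simp
  have : PowerSeries.X ^ 3 ∣ p - (2 + 2 * PowerSeries.X ^ 2) := by
    rw [PowerSeries.X_pow_dvd_iff]
    intro m hm
    rw [show (2 : PowerSeries ℂ) = PowerSeries.C 2 from (map_ofNat _ 2).symm]
    interval_cases m
    · rw [map_sub, c0]; simp
    · simp [c1, PowerSeries.coeff_C, PowerSeries.coeff_X_pow]
    · simp [c2, PowerSeries.coeff_C, PowerSeries.coeff_X_pow]
  obtain ⟨D, hD⟩ := this
  exact ⟨D, by rw [← hD]; convert h using 1; ring⟩

lemma HasQ.X : HasQ xx PowerSeries.X := fun τ ↦ by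
  have := hasSum_single (f := fun m : ℕ ↦ (PowerSeries.X : PowerSeries ℂ).coeff m • Function.Periodic.qParam 2 (τ : ℂ) ^ m) 1
    (fun m hm ↦ by simp [PowerSeries.coeff_X, hm])
  simpa [xx] using this

lemma th4_q : ∃ D, HasQ th4 (1 - 2 * PowerSeries.X + PowerSeries.X ^ 4 * D) := by
  obtain ⟨D, hD⟩ := th3_q
  refine ⟨PowerSeries.mk fun m ↦ (-1) ^ m * D.coeff m, ?_⟩
  have h := hD.T
  simp only [th3_T] at h
  convert h using 1
  ext m
  rw [show (2 : PowerSeries ℂ) = PowerSeries.C 2 from (map_ofNat _ 2).symm]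
  simp only [map_add, map_sub, PowerSeries.coeff_mk, PowerSeries.coeff_X_pow_mul', PowerSeries.coeff_C_mul,
    PowerSeries.coeff_one, PowerSeries.coeff_X]
  rcases m with _ | _ | _ | _ | m <;> simp
  left; ring

lemma tA_q : ∃ D, HasQ tA (1 + 8 * PowerSeries.X + 24 * PowerSeries.X ^ 2 + 32 * PowerSeries.X ^ 3 + PowerSeries.X ^ 4 * D) := by
  obtain ⟨D, hD⟩ := th3_q
  refine ⟨(16 + 4 * (1 + 2 * PowerSeries.X) ^ 3 * D +
      6 * (1 + 2 * PowerSeries.X) ^ 2 * PowerSeries.X ^ 4 * D ^ 2 + 4 * (1 + 2 * PowerSeries.X) * PowerSeries.X ^ 8 * D ^ 3 + PowerSeries.X ^ 12 * D ^ 4), ?_⟩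
  convert hD.pow 4 using 1
  · rfl
  · ring

lemma tB_q : ∃ D, HasQ tB (1 - 8 * PowerSeries.X + 24 * PowerSeries.X ^ 2 - 32 * PowerSeries.X ^ 3 + PowerSeries.X ^ 4 * D) := by
  obtain ⟨D, hD⟩ := th4_q
  refine ⟨(16 + 4 * (1 - 2 * PowerSeries.X) ^ 3 * D +
      6 * (1 - 2 * PowerSeries.X) ^ 2 * PowerSeries.X ^ 4 * D ^ 2 + 4 * (1 - 2 * PowerSeries.X) * PowerSeries.X ^ 8 * D ^ 3 + PowerSeries.X ^ 12 * D ^ 4), ?_⟩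
  convert hD.pow 4 using 1
  · rfl
  · ring

lemma tC_q : ∃ D, HasQ tC (16 * PowerSeries.X + 64 * PowerSeries.X ^ 3 + PowerSeries.X ^ 4 * D) := by
  obtain ⟨D, hD⟩ := th2_q
  refine ⟨(4 * (2 + 2 * PowerSeries.X ^ 2) ^ 3 * D + 6 * (2 + 2 * PowerSeries.X ^ 2) ^ 2 * PowerSeries.X ^ 3 * D ^ 2
       + 4 * (2 + 2 * PowerSeries.X ^ 2) * PowerSeries.X ^ 6 * D ^ 3 + PowerSeries.X ^ 9 * D ^ 4
       + 96 * PowerSeries.X + 64 * PowerSeries.X ^ 3 + 16 * PowerSeries.X ^ 5), ?_⟩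
  convert HasQ.X.mul (hD.pow 4) using 1
  · rfl
  · ring

end part4

section part5
open UpperHalfPlane ModularForm ModularFormClass MatrixGroups EisensteinSeries

section ringpart
variable {S : Type*} [CommRing S]

lemma rg_ab (X a b : S) : ∃ m, (1 + 8 * X + 24 * X ^ 2 + 32 * X ^ 3 + X ^ 4 * a) *
    (1 - 8 * X + 24 * X ^ 2 - 32 * X ^ 3 + X ^ 4 * b) = 1 - 16 * X ^ 2 + X ^ 4 * m :=
  ⟨(1) * b + (64) + (8) * X * b + (24) * X ^ 2 * b + (-1024) * X ^ 2 + (32) * X ^ 3 * b + (1) * a + (-8) * X * a + (24) * X ^ 2 * a + (-32) * X ^ 3 * a + (1) * X ^ 4 * a * b, by ring⟩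

lemma rg_abc (X m c : S) : ∃ l, (1 - 16 * X ^ 2 + X ^ 4 * m) * (16 * X + 64 * X ^ 3 + X ^ 4 * c) =
    16 * X - 192 * X ^ 3 + X ^ 4 * l :=
  ⟨(1) * c + (-1024) * X + (-16) * X ^ 2 * c + (16) * X * m + (64) * X ^ 3 * m + (1) * X ^ 4 * c * m, by ring⟩

lemma rg_K (X a b c p q r n r1 r3 : S) : ∃ l,
    (1 + n * X ^ 3 + X ^ 4 * p) * ((1 - 8 * X + 24 * X ^ 2 - 32 * X ^ 3 + X ^ 4 * b) - (16 * X + 64 * X ^ 3 + X ^ 4 * c))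
    - (1 - n * X ^ 3 + X ^ 4 * q) * ((1 + 8 * X + 24 * X ^ 2 + 32 * X ^ 3 + X ^ 4 * a) + (16 * X + 64 * X ^ 3 + X ^ 4 * c))
    + (r1 * X + r3 * X ^ 3 + X ^ 4 * r) * ((1 + 8 * X + 24 * X ^ 2 + 32 * X ^ 3 + X ^ 4 * a) + (1 - 8 * X + 24 * X ^ 2 - 32 * X ^ 3 + X ^ 4 * b))
    = (2 * r1 - 48) * X + (2 * n - 192 + 2 * r3 + 48 * r1) * X ^ 3 + X ^ 4 * l :=
  ⟨(1) * b + (-2) * c + (48) * X * n + (1) * X ^ 3 * b * n + (1) * p + (-24) * X * p + (24) * X ^ 2 * p + (-96) * X ^ 3 * p + (1) * X ^ 4 * b * p + (-1) * X ^ 4 * c * p + (-1) * a + (1) * X ^ 3 * a * n + (-1) * q + (-24) * X * q + (-24) * X ^ 2 * q + (-96) * X ^ 3 * q + (-1) * X ^ 4 * a * q + (-1) * X ^ 4 * c * q + (1) * X * a * r1 + (1) * X * b * r1 + (48) * X * r3 + (1) * X ^ 3 * a * r3 + (1) * X ^ 3 * b * r3 + (2) * r + (48) * X ^ 2 * r +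 (1) * X ^ 4 * a * r + (1) * X ^ 4 * b * r, by ring⟩

lemma rg_H1 (X a b c p q r n r1 r3 : S) : ∃ l,
    (1 + 8 * X + 24 * X ^ 2 + 32 * X ^ 3 + X ^ 4 * a) * (1 - 8 * X + 24 * X ^ 2 - 32 * X ^ 3 + X ^ 4 * b) *
    (16 * X + 64 * X ^ 3 + X ^ 4 * c) * (
    (1 + n * X ^ 3 + X ^ 4 * p) * ((1 - 8 * X + 24 * X ^ 2 - 32 * X ^ 3 + X ^ 4 * b) - (16 * X + 64 * X ^ 3 + X ^ 4 * c))
    - (1 - n * X ^ 3 + X ^ 4 * q) * ((1 + 8 * X + 24 * X ^ 2 + 32 * X ^ 3 + X ^ 4 * a) + (16 * X + 64 * X ^ 3 + X ^ 4 * c))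
    + (r1 * X + r3 * X ^ 3 + X ^ 4 * r) * ((1 + 8 * X + 24 * X ^ 2 + 32 * X ^ 3 + X ^ 4 * a) + (1 - 8 * X + 24 * X ^ 2 - 32 * X ^ 3 + X ^ 4 * b)))
    = 16 * (2 * r1 - 48) * X ^ 2 + (16 * (2 * n - 192 + 2 * r3 + 48 * r1) - 192 * (2 * r1 - 48)) * X ^ 4 + X ^ 5 * l := by
  obtain ⟨m, hm⟩ := rg_ab X a b
  obtain ⟨l, hl⟩ := rg_abc X m c
  obtain ⟨k, hk⟩ := rg_K X a b c p q r n r1 r3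
  rw [hk, hm, hl]
  exact ⟨16 * k + l * (2 * r1 - 48) - 192 * X * (2 * n - 192 + 2 * r3 + 48 * r1) - 192 * X ^ 2 * k
    + X ^ 2 * l * (2 * n - 192 + 2 * r3 + 48 * r1) + X ^ 3 * l * k, by ring⟩

lemma rg_F (X a b c p : S) : ∃ l,
    (1 + X ^ 3 * p) * ((1 + 8 * X + 24 * X ^ 2 + X ^ 3 * a) * ((1 - 8 * X + 24 * X ^ 2 + X ^ 3 * b) - (16 * X + X ^ 3 * c)) *
    (1 - 8 * X + 24 * X ^ 2 + X ^ 3 * b) ^ 4) = 1 - 48 * X + 848 * X ^ 2 + X ^ 3 * l := by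
  have h2 : ∃ u, (1 - 8 * X + 24 * X ^ 2 + X ^ 3 * b) ^ 2 = 1 - 16 * X + 112 * X ^ 2 + X ^ 3 * u :=
    ⟨(2) * b + (-384) + (-16) * X * b + (576) * X + (48) * X ^ 2 * b + (1) * X ^ 3 * b ^ 2, by ring⟩
  obtain ⟨u, hu⟩ := h2
  have h4 : ∃ v, (1 - 8 * X + 24 * X ^ 2 + X ^ 3 * b) ^ 4 = 1 - 32 * X + 480 * X ^ 2 + X ^ 3 * v :=
    ⟨(2) * u + (-3584) + (-32) * X * u + (12544) * X + (224) * X ^ 2 * u + (1) * X ^ 3 * u ^ 2, by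
      rw [show (4 : ℕ) = 2 * 2 from rfl, pow_mul, hu]; ring⟩
  obtain ⟨v, hv⟩ := h4
  have h5 : ∃ w, (1 + 8 * X + 24 * X ^ 2 + X ^ 3 * a) * ((1 - 8 * X + 24 * X ^ 2 + X ^ 3 * b) - (16 * X + X ^ 3 * c)) =
      1 - 16 * X - 144 * X ^ 2 + X ^ 3 * w :=
    ⟨(1) * b + (-1) * c + (-384) + (8) * X * b + (-8) * X * c + (576) * X + (24) * X ^ 2 * b + (-24) * X ^ 2 * c + (1) * a + (-24) * X * a + (24) * X ^ 2 * a + (1) * X ^ 3 * a * b + (-1) * X ^ 3 * a * c, by ring⟩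
  obtain ⟨w, hw⟩ := h5
  have h6 : ∃ z, (1 - 16 * X - 144 * X ^ 2 + X ^ 3 * w) * (1 - 32 * X + 480 * X ^ 2 + X ^ 3 * v) =
      1 - 48 * X + 848 * X ^ 2 + X ^ 3 * z :=
    ⟨(1) * v + (-3072) + (-16) * X * v + (-69120) * X + (-144) * X ^ 2 * v + (1) * w + (-32) * X * w + (480) * X ^ 2 * w + (1) * X ^ 3 * v * w, by ring⟩
  obtain ⟨z, hz⟩ := h6
  rw [hw, hv, hz]
  exact ⟨z + p * (1 - 48 * X + 848 * X ^ 2 + X ^ 3 * z), by ring⟩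

lemma rg_C4 (X c : S) : ∃ l, (16 * X + 64 * X ^ 3 + X ^ 4 * c) ^ 4 =
    X ^ 4 * (65536 + 1048576 * X ^ 2 + X ^ 3 * l) := by
  have h2 : ∃ u, (16 + 64 * X ^ 2 + X ^ 3 * c) ^ 2 = 256 + 2048 * X ^ 2 + X ^ 3 * u :=
    ⟨(32) * c + (4096) * X + (128) * X ^ 2 * c + (1) * X ^ 3 * c ^ 2, by ring⟩
  obtain ⟨u, hu⟩ := h2
  refine ⟨(512) * u + (4194304) * X + (4096) * X ^ 2 * u + (1) * X ^ 3 * u ^ 2, ?_⟩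
  rw [show 16 * X + 64 * X ^ 3 + X ^ 4 * c = X * (16 + 64 * X ^ 2 + X ^ 3 * c) by ring, mul_pow,
    show (16 + 64 * X ^ 2 + X ^ 3 * c) ^ 4 = ((16 + 64 * X ^ 2 + X ^ 3 * c) ^ 2) ^ 2 by rw [← pow_mul], hu]
  ring

lemma rg_H2 (X a b c p q r : S) (A B C : S)
    (hA : A = 1 + 8 * X + 24 * X ^ 2 + 32 * X ^ 3 + X ^ 4 * a)
    (hB : B = 1 - 8 * X + 24 * X ^ 2 - 32 * X ^ 3 + X ^ 4 * b)
    (hC : C = 16 * X + 64 * X ^ 3 + X ^ 4 * c) : ∃ l,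
    (1 + X ^ 3 * p) * (A * (B - C) * B ^ 4 * C ^ 4) + (1 + X ^ 3 * q) * (B * (A + C) * A ^ 4 * C ^ 4)
     - (X ^ 6 * r) * (C * (A + B) * (A * B) ^ 4) =
    131072 * X ^ 4 + 131072 * 864 * X ^ 6 + X ^ 7 * l := by
  obtain ⟨l1, h1⟩ := rg_F X (32 + X * a) (-32 + X * b) (64 + X * c) p
  obtain ⟨l2, h2⟩ := rg_F (-X) (32 - X * b) (-32 - X * a) (64 + X * c) (-q)
  obtain ⟨l3, h3⟩ := rg_C4 X c
  rw [show 1 + 8 * X + 24 * X ^ 2 + X ^ 3 * (32 + X * a) = A by rw [hA]; ring,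
    show 1 - 8 * X + 24 * X ^ 2 + X ^ 3 * (-32 + X * b) = B by rw [hB]; ring,
    show 16 * X + X ^ 3 * (64 + X * c) = C by rw [hC]; ring] at h1
  rw [show 1 + 8 * -X + 24 * (-X) ^ 2 + (-X) ^ 3 * (32 - X * b) = B by rw [hB]; ring,
    show 1 - 8 * -X + 24 * (-X) ^ 2 + (-X) ^ 3 * (-32 - X * a) = A by rw [hA]; ring,
    show 16 * -X + (-X) ^ 3 * (64 + X * c) = -C by rw [hC]; ring] at h2
  rw [← hC] at h3
  have e : (1 + X ^ 3 * p) * (A * (B - C) * B ^ 4 * C ^ 4) + (1 + X ^ 3 * q) * (B * (A + C) * A ^ 4 * C ^ 4)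
     - (X ^ 6 * r) * (C * (A + B) * (A * B) ^ 4) =
     ((1 + X ^ 3 * p) * (A * (B - C) * B ^ 4) + (1 + (-X) ^ 3 * (-q)) * (B * (A - -C) * A ^ 4)) * C ^ 4
     - X ^ 6 * r * (C * ((A + B) * (A * B) ^ 4)) := by ring
  rw [e, h1, h2, h3]
  generalize (A + B) * (A * B) ^ 4 = Z
  rw [hC]
  exact ⟨2 * l3 + 1696 * 1048576 * X + 1696 * X ^ 2 * l3 + (l1 - l2) * (65536 + 1048576 * X ^ 2 + X ^ 3 * l3)
    - r * (16 + 64 * X ^ 2 + X ^ 3 * c) * Z, by ring⟩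

end ringpart

lemma num_C (n : ℕ) [n.AtLeastTwo] : (OfNat.ofNat n : PowerSeries ℂ) = PowerSeries.C (OfNat.ofNat n : ℂ) :=
  (map_ofNat _ n).symm

section triple
variable {P Q R : ℍ → ℂ} {p r : PowerSeries ℂ}

lemma IsTriple.qQ (h : IsTriple 18 P Q R) {n : ℂ} {p : PowerSeries ℂ}
    (hP : HasQ P (1 + PowerSeries.C n * PowerSeries.X ^ 3 + PowerSeries.X ^ 4 * p)) :
    ∃ q, HasQ Q (1 - PowerSeries.C n * PowerSeries.X ^ 3 + PowerSeries.X ^ 4 * q) := by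
  refine ⟨PowerSeries.mk fun m ↦ (-1) ^ m * p.coeff m, ?_⟩
  have h := hP.T.congr fun τ ↦ (h.PT τ).symm
  convert h using 1
  ext m
  simp only [map_add, map_sub, PowerSeries.coeff_mk, PowerSeries.coeff_X_pow_mul', PowerSeries.coeff_C_mul,
    PowerSeries.coeff_one, PowerSeries.coeff_X_pow]
  rcases m with _ | _ | _ | _ | m <;> simp
  · ring
  · left; ring

theorem IsTriple.rel1 (h : IsTriple 18 P Q R) {n r1 r3 : ℂ} {p r : PowerSeries ℂ}
    (hP : HasQ P (1 + PowerSeries.C n * PowerSeries.X ^ 3 + PowerSeries.X ^ 4 * p))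
    (hR : HasQ R (PowerSeries.C r1 * PowerSeries.X + PowerSeries.C r3 * PowerSeries.X ^ 3 + PowerSeries.X ^ 4 * r)) :
    n + r3 + 60 * r1 = 960 := by
  obtain ⟨q, hQ⟩ := h.qQ hP
  obtain ⟨a, hA⟩ := tA_q
  obtain ⟨b, hB⟩ := tB_q
  obtain ⟨c, hC⟩ := tC_q
  have hH := ((hA.mul hB).mul hC).mul (((hP.mul (hB.sub hC)).sub (hQ.mul (hA.add hC))).add (hR.mul (hA.add hB)))
  obtain ⟨l, hl⟩ := rg_H1 PowerSeries.X a b c p q r (PowerSeries.C n) (PowerSeries.C r1) (PowerSeries.C r3)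
  rw [hl] at hH
  have hS : ∀ τ : ℍ, (tA * tB * tC * (P * (tB - tC) - Q * (tA + tC) + R * (tA + tB))) (ModularGroup.S • τ) =
      (τ : ℂ) ^ (26 : ℤ) * (tA * tB * tC * (P * (tB - tC) - Q * (tA + tC) + R * (tA + tB))) τ := by
    intro τ
    simp only [Pi.mul_apply, Pi.add_apply, Pi.sub_apply, abc.PS, abc.QS, abc.RS, h.PS, h.QS, h.RS]
    rw [show (26 : ℤ) = ((26 : ℕ) : ℤ) from rfl, zpow_natCast]
    ring
  have hT : ∀ τ : ℍ, (tA * tB * tC * (P * (tB - tC) - Q * (tA + tC) + R * (tA + tB))) (ModularGroup.T • τ) =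
      (tA * tB * tC * (P * (tB - tC) - Q * (tA + tC) + R * (tA + tB))) τ := by
    intro τ
    simp only [Pi.mul_apply, Pi.add_apply, Pi.sub_apply, abc.PT, abc.QT, abc.RT, h.PT, h.QT, h.RT]
    ring
  have key := wt26 (hH.toMF 26 hS hT)
  simp only [HasQ.toMF_coeff] at key
  have eC : 16 * (2 * PowerSeries.C r1 - 48) * PowerSeries.X ^ 2 + (16 * (2 * PowerSeries.C n - 192 + 2 * PowerSeries.C r3 + 48 * PowerSeries.C r1) - 192 * (2 * PowerSeries.C r1 - 48)) * PowerSeries.X ^ 4 + PowerSeries.X ^ 5 * l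
     = PowerSeries.C (16 * (2 * r1 - 48)) * PowerSeries.X ^ 2 + PowerSeries.C (16 * (2 * n - 192 + 2 * r3 + 48 * r1) - 192 * (2 * r1 - 48)) * PowerSeries.X ^ 4 + PowerSeries.X ^ 5 * l := by
    simp only [map_mul, map_sub, map_add, map_ofNat]
  rw [eC] at key
  simp only [map_add, PowerSeries.coeff_X_pow_mul', PowerSeries.coeff_C_mul, PowerSeries.coeff_X_pow] at key
  norm_num at key
  linear_combination (1 / 32) * key

theorem IsTriple.rel2 (h : IsTriple 18 P Q R) {n : ℂ} {p r : PowerSeries ℂ}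
    (hP : HasQ P (1 + PowerSeries.C n * PowerSeries.X ^ 3 + PowerSeries.X ^ 4 * p))
    (hR : HasQ R (PowerSeries.X ^ 6 * r)) : False := by
  obtain ⟨q, hQ⟩ := h.qQ hP
  obtain ⟨a, hA⟩ := tA_q
  obtain ⟨b, hB⟩ := tB_q
  obtain ⟨c, hC⟩ := tC_q
  rw [show 1 + PowerSeries.C n * PowerSeries.X ^ 3 + PowerSeries.X ^ 4 * p = 1 + PowerSeries.X ^ 3 * (PowerSeries.C n + PowerSeries.X * p) by ring] at hP
  rw [show 1 - PowerSeries.C n * PowerSeries.X ^ 3 + PowerSeries.X ^ 4 * q = 1 + PowerSeries.X ^ 3 * (-PowerSeries.C n + PowerSeries.X * q) by ring] at hQ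
  have hH := ((hP.mul (((hA.mul (hB.sub hC)).mul (hB.pow 4)).mul (hC.pow 4))).add
    (hQ.mul (((hB.mul (hA.add hC)).mul (hA.pow 4)).mul (hC.pow 4)))).sub
    (hR.mul ((hC.mul (hA.add hB)).mul ((hA.mul hB).pow 4)))
  obtain ⟨l, hl⟩ := rg_H2 PowerSeries.X a b c (PowerSeries.C n + PowerSeries.X * p) (-PowerSeries.C n + PowerSeries.X * q) r _ _ _ rfl rfl rfl
  rw [hl] at hH
  set f := P * (tA * (tB - tC) * tB ^ 4 * tC ^ 4) + Q * (tB * (tA + tC) * tA ^ 4 * tC ^ 4) - R * (tC * (tA + tB) * (tA * tB) ^ 4) with hf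
  have hS : ∀ τ : ℍ, f (ModularGroup.S • τ) = (τ : ℂ) ^ (38 : ℤ) * f τ := by
    intro τ
    simp only [hf, Pi.mul_apply, Pi.add_apply, Pi.sub_apply, Pi.pow_apply, abc.PS, abc.QS, abc.RS, h.PS, h.QS, h.RS]
    rw [show (38 : ℤ) = ((38 : ℕ) : ℤ) from rfl, zpow_natCast]
    ring
  have hT : ∀ τ : ℍ, f (ModularGroup.T • τ) = f τ := by
    intro τ
    simp only [hf, Pi.mul_apply, Pi.add_apply, Pi.sub_apply, Pi.pow_apply, abc.PT, abc.QT, abc.RT, h.PT, h.QT, h.RT]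
    ring
  have key := wt38 (hH.toMF 38 hS hT)
  simp only [HasQ.toMF_coeff] at key
  have eC : 131072 * PowerSeries.X ^ 4 + 131072 * 864 * PowerSeries.X ^ 6 + PowerSeries.X ^ 7 * l
     = PowerSeries.C 131072 * PowerSeries.X ^ 4 + PowerSeries.C (131072 * 864) * PowerSeries.X ^ 6 + PowerSeries.X ^ 7 * l := by
    simp only [map_mul, map_ofNat]
  rw [eC] at key
  simp only [map_add, PowerSeries.coeff_X_pow_mul', PowerSeries.coeff_C_mul, PowerSeries.coeff_X_pow] at key
  norm_num at key

end triple

end part5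

section part6
open UpperHalfPlane ModularForm ModularFormClass MatrixGroups EisensteinSeries

section poisson
open MeasureTheory
variable {ι : Type*} [Fintype ι]

/-- The integer vector as a real vector. -/
def rv (m : ι → ℤ) : ι → ℝ := fun i ↦ (m i : ℝ)

/-- The projection from `ℝⁿ` to the torus. -/
def pr (x : ι → ℝ) : UnitAddTorus ι := fun i ↦ (x i : UnitAddCircle)

lemma pr_quot : IsOpenQuotientMap (pr (ι := ι)) :=
  IsOpenQuotientMap.piMap (fun _ ↦ QuotientAddGroup.isOpenQuotientMap_mk)

lemma pr_eq {x y : ι → ℝ} (h : pr x = pr y) : ∃ m : ι → ℤ, y = x + rv m := by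
  have h1 : ∀ i, ∃ m : ℤ, y i = x i + m := by
    intro i
    have h2 := congrFun h i
    simp only [pr] at h2
    rw [eq_comm, QuotientAddGroup.eq_iff_sub_mem, AddSubgroup.mem_zmultiples_iff] at h2
    obtain ⟨k, hk⟩ := h2
    exact ⟨k, by simp at hk; linarith⟩
  choose m hm using h1
  exact ⟨m, funext hm⟩

lemma mFourier_pr (k : ι → ℤ) (x : ι → ℝ) :
    UnitAddTorus.mFourier k (pr x) = Complex.exp (2 * Real.pi * Complex.I * ∑ i, (k i : ℂ) * x i) := by
  simp only [UnitAddTorus.mFourier, ContinuousMap.coe_mk, pr, fourier_coe_apply]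
  rw [← Complex.exp_sum, Finset.mul_sum]
  congr 1
  refine Finset.sum_congr rfl fun i _ ↦ ?_
  push_cast; ring

lemma mFourier_rv (k m : ι → ℤ) (x : ι → ℝ) :
    UnitAddTorus.mFourier k (pr (x + rv m)) = UnitAddTorus.mFourier k (pr x) := by
  congr 1
  funext i
  simp [pr, rv]

/-- The periodization of `g`. -/
def perz (g : (ι → ℝ) → ℂ) (x : ι → ℝ) : ℂ := ∑' m : ι → ℤ, g (x + rv m)

lemma perz_add (g : (ι → ℝ) → ℂ) (x : ι → ℝ) (k : ι → ℤ) : perz g (x + rv k) = perz g x := by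
  simp only [perz]
  rw [← (Equiv.addLeft k).tsum_eq (fun m ↦ g (x + rv m))]
  congr 1; funext m; congr 1; funext i; simp [rv]; ring

def cube (m : ι → ℤ) : Set (ι → ℝ) := {x | ∀ i, x i ∈ Set.Ioc (m i : ℝ) (m i + 1)}

lemma cube_meas (m : ι → ℤ) : MeasurableSet (cube m) :=
  MeasurableSet.univ_pi' (fun _ => measurableSet_Ioc)

lemma cube_disj : Pairwise (Function.onFun Disjoint (cube (ι := ι))) := by
  intro m n hmn
  rw [Function.onFun, Set.disjoint_left]
  intro x hx hy
  apply hmn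
  funext i
  have h1 := hx i
  have h2 := hy i
  simp only [Set.mem_Ioc] at h1 h2
  have h3 : (m i : ℝ) < n i + 1 := by linarith
  have h4 : (n i : ℝ) < m i + 1 := by linarith
  norm_cast at h3 h4
  omega

lemma cube_union : ⋃ m, cube (ι := ι) m = Set.univ := by
  rw [Set.eq_univ_iff_forall]
  intro x
  rw [Set.mem_iUnion]
  refine ⟨fun i ↦ ⌈x i⌉ - 1, fun i ↦ ?_⟩
  have h1 := Int.ceil_lt_add_one (x i)
  have h2 := Int.le_ceil (x i)
  push_cast
  constructor <;> linarith

lemma cube_preimage (m : ι → ℤ) : (fun x ↦ x + rv m) ⁻¹' cube m = cube 0 := by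
  ext x
  simp only [cube, Set.mem_preimage, Set.mem_setOf_eq, Pi.add_apply, rv, Set.mem_Ioc, Pi.zero_apply]
  refine forall_congr' fun i ↦ ?_
  constructor <;> rintro ⟨h1, h2⟩ <;> constructor <;> push_cast at * <;> linarith

lemma cube_subset : cube (ι := ι) 0 ⊆ Set.Icc 0 1 := by
  intro x hx
  constructor <;> intro i <;> have := hx i <;> simp at this <;> simp [this.1.le, this.2]

theorem poisson_gen (g : (ι → ℝ) → ℂ) (hc : Continuous g) (hi : Integrable g)
    (hb : ∀ K : Set (ι → ℝ), IsCompact K → ∃ u : (ι → ℤ) → ℝ, Summable u ∧ ∀ x ∈ K, ∀ m, ‖g (x + rv m)‖ ≤ u m)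
    (hs : Summable fun k : ι → ℤ ↦ ∫ x, Complex.exp (-(2 * Real.pi * Complex.I * ∑ i, (k i : ℂ) * x i)) * g x)
    (x : ι → ℝ) :
    HasSum (fun k : ι → ℤ ↦ (∫ x, Complex.exp (-(2 * Real.pi * Complex.I * ∑ i, (k i : ℂ) * x i)) * g x) *
      Complex.exp (2 * Real.pi * Complex.I * ∑ i, (k i : ℂ) * x i)) (∑' m : ι → ℤ, g (x + rv m)) := by
  have hcont : Continuous (perz g) := by
    rw [continuous_iff_continuousAt]
    intro x
    obtain ⟨u, hu, hu2⟩ := hb (Metric.closedBall x 1) (isCompact_closedBall x 1)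
    have : ContinuousOn (perz g) (Metric.closedBall x 1) :=
      continuousOn_tsum (fun m ↦ (hc.comp (continuous_id.add continuous_const)).continuousOn) hu
        (fun m y hy ↦ hu2 y hy m)
    exact this.continuousAt (Metric.closedBall_mem_nhds x one_pos)
  let F0 : UnitAddTorus ι → ℂ := fun t ↦ perz g (fun i ↦ Quotient.out (t i))
  have hF0 : ∀ x, F0 (pr x) = perz g x := by
    intro x
    have : pr (fun i ↦ Quotient.out (pr x i)) = pr x := by
      funext i
      exact Quotient.out_eq (pr x i)
    obtain ⟨m, hm⟩ := pr_eq this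
    conv_rhs => rw [hm, perz_add]
  have hF0c : Continuous F0 := by
    rw [pr_quot.isQuotientMap.continuous_iff]
    convert hcont using 1
    funext x; exact hF0 x
  let F : C(UnitAddTorus ι, ℂ) := ⟨F0, hF0c⟩
  have hcoef : ∀ k, UnitAddTorus.mFourierCoeff F k =
      ∫ x, Complex.exp (-(2 * Real.pi * Complex.I * ∑ i, (k i : ℂ) * x i)) * g x := by
    intro k
    rw [UnitAddTorus.mFourierCoeff_eq_integral F k 0]
    set h : (ι → ℝ) → ℂ := fun x ↦ UnitAddTorus.mFourier (-k) (pr x) * g x with hh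
    have hprc : Continuous (pr (ι := ι)) := pr_quot.continuous
    have hhc : Continuous h := ((UnitAddTorus.mFourier (-k)).continuous.comp hprc).mul hc
    have hn : ∀ t, ‖UnitAddTorus.mFourier (-k) t‖ ≤ 1 := fun t ↦
      ((UnitAddTorus.mFourier (-k)).norm_coe_le_norm t).trans UnitAddTorus.mFourier_norm.le
    have hhi : Integrable h := by
      refine hi.bdd_mul (c := 1) ?_ (Filter.Eventually.of_forall fun x ↦ hn _)
      exact ((UnitAddTorus.mFourier (-k)).continuous.comp hprc).aestronglyMeasurable
    have e1 : ∫ x, Complex.exp (-(2 * Real.pi * Complex.I * ∑ i, (k i : ℂ) * x i)) * g x = ∫ x, h x := by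
      congr 1; funext x
      rw [hh]; simp only [mFourier_pr]
      congr 2
      simp
    rw [e1]
    have s1 : HasSum (fun m ↦ ∫ x in cube (ι := ι) m, h x) (∫ x, h x) := by
      have := hasSum_integral_iUnion (f := h) (μ := volume) (cube_meas (ι := ι)) cube_disj (by rw [cube_union]; exact hhi.integrableOn)
      rwa [cube_union, setIntegral_univ] at this
    have e2 : ∀ m, ∫ x in cube (ι := ι) m, h x = ∫ x in cube (ι := ι) 0, h (x + rv m) := by
      intro m
      rw [← cube_preimage m]
      exact ((measurePreserving_add_right volume (rv m)).setIntegral_preimage_emb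
        (measurableEmbedding_addRight (rv m)) h (cube m)).symm
    simp only [e2] at s1
    refine HasSum.unique ?_ s1
    obtain ⟨u, hu, hu2⟩ := hb (Set.Icc 0 1) isCompact_Icc
    have hset : {x : ι → ℝ | ∀ i, x i ∈ Set.Ioc ((0 : ι → ℝ) i) ((0 : ι → ℝ) i + 1)} = cube 0 := by
      ext x; simp [cube]
    rw [hset]
    have hfin : volume (cube (ι := ι) 0) ≠ ⊤ :=
      (measure_mono cube_subset |>.trans_lt (isCompact_Icc.measure_lt_top)).ne
    refine hasSum_integral_of_dominated_convergence (fun m _ ↦ u m) ?_ ?_ ?_ ?_ ?_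
    · intro m
      exact (hhc.comp (continuous_id.add continuous_const)).aestronglyMeasurable
    · intro m
      refine (ae_restrict_iff' (cube_meas 0)).mpr (Filter.Eventually.of_forall fun x hx ↦ ?_)
      rw [hh]
      simp only [norm_mul]
      calc _ ≤ 1 * u m := mul_le_mul (hn _) (hu2 x (cube_subset hx) m) (norm_nonneg _) zero_le_one
        _ = u m := one_mul _
    · exact Filter.Eventually.of_forall fun _ ↦ hu
    · exact integrableOn_const hfin
    · refine (ae_restrict_iff' (cube_meas 0)).mpr (Filter.Eventually.of_forall fun x hx ↦ ?_)
      have hsum : HasSum (fun m ↦ g (x + rv m)) (perz g x) :=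
        (Summable.of_norm_bounded hu (fun m ↦ hu2 x (cube_subset hx) m)).hasSum
      have := hsum.mul_left (UnitAddTorus.mFourier (-k) (pr x))
      rw [← hF0] at this
      simp only [hh, mFourier_rv]
      exact this
  have hs' : Summable (UnitAddTorus.mFourierCoeff F) := by
    rw [show UnitAddTorus.mFourierCoeff F = _ from funext hcoef]; exact hs
  have := UnitAddTorus.hasSum_mFourier_series_apply_of_summable hs' (pr x)
  simp only [hcoef, mFourier_pr, smul_eq_mul] at this
  have e : F (pr x) = ∑' m : ι → ℤ, g (x + rv m) := hF0 x
  rw [e] at this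
  exact this

end poisson

end part6

section part7
open UpperHalfPlane ModularForm ModularFormClass MatrixGroups EisensteinSeries

section lattice
open MeasureTheory
variable {n : ℕ} {L : Set (EuclideanSpace ℝ (Fin n))}

lemma normOf_eq (x : EuclideanSpace ℝ (Fin n)) : normOf x = ‖x‖ ^ 2 := real_inner_self_eq_norm_sq x

/-- A set equal to its dual is a submodule. -/
def latt (L : Set (EuclideanSpace ℝ (Fin n))) (h : IsUnimodularLattice L) : Submodule ℤ (EuclideanSpace ℝ (Fin n)) :=
  AddSubgroup.toIntSubmodule
  { carrier := L
    zero_mem' := by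
      rw [h]; intro y _; exact ⟨0, by simp⟩
    add_mem' := by
      intro a b ha hb
      rw [h] at ha hb ⊢
      intro y hy
      obtain ⟨m, hm⟩ := ha y hy
      obtain ⟨k, hk⟩ := hb y hy
      exact ⟨m + k, by rw [inner_add_left, hm, hk]; push_cast; rfl⟩
    neg_mem' := by
      intro a ha
      rw [h] at ha ⊢
      intro y hy
      obtain ⟨m, hm⟩ := ha y hy
      exact ⟨-m, by rw [inner_neg_left, hm]; push_cast; rfl⟩ }

lemma mem_latt (h : IsUnimodularLattice L) (x) : x ∈ latt L h ↔ x ∈ L := Iff.rfl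

lemma inner_int (h : IsUnimodularLattice L) {x y : EuclideanSpace ℝ (Fin n)} (hx : x ∈ L) (hy : y ∈ L) : ∃ m : ℤ, ⟪x, y⟫ = (m : ℝ) := by
  rw [h] at hx; exact hx y hy

lemma mem_of_inner (h : IsUnimodularLattice L) {x : EuclideanSpace ℝ (Fin n)} (hx : ∀ y ∈ L, ∃ m : ℤ, ⟪x, y⟫ = (m : ℝ)) : x ∈ L := by
  rw [h]; exact hx

lemma one_le_norm (h : IsUnimodularLattice L) {x : EuclideanSpace ℝ (Fin n)} (hx : x ∈ L) (h0 : x ≠ 0) : 1 ≤ ‖x‖ := by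
  obtain ⟨m, hm⟩ := inner_int h hx hx
  rw [real_inner_self_eq_norm_sq] at hm
  have hp : 0 < ‖x‖ := norm_pos_iff.mpr h0
  have h1 : (0 : ℝ) < m := by rw [← hm]; positivity
  have h2 : (1 : ℝ) ≤ m := by exact_mod_cast (by exact_mod_cast h1 : (0 : ℤ) < m)
  rw [← hm] at h2
  nlinarith

lemma latt_discrete (h : IsUnimodularLattice L) : DiscreteTopology (latt L h) := by
  apply DiscreteTopology.of_forall_le_dist (r := 1) one_pos
  intro x y hxy
  rw [Subtype.dist_eq, dist_eq_norm]
  apply one_le_norm h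
  · exact (latt L h).sub_mem x.2 y.2
  · rw [sub_ne_zero]; exact fun e ↦ hxy (Subtype.ext e)

lemma latt_span (h : IsUnimodularLattice L) : Submodule.span ℝ (latt L h : Set (EuclideanSpace ℝ (Fin n))) = ⊤ := by
  rw [← Submodule.orthogonal_eq_bot_iff, Submodule.eq_bot_iff]
  intro v hv
  by_contra hne
  have hall : ∀ t : ℝ, t • v ∈ L := by
    intro t
    apply mem_of_inner h
    intro y hy
    refine ⟨0, ?_⟩
    rw [inner_smul_left, real_inner_comm, (Submodule.mem_orthogonal _ v).mp hv y (Submodule.subset_span hy)]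
    simp
  have := one_le_norm h (hall (1 / (2 * ‖v‖))) (by
    have : ‖v‖ ≠ 0 := norm_ne_zero_iff.mpr hne
    exact smul_ne_zero (by positivity) hne)
  rw [norm_smul] at this
  have hv0 : 0 < ‖v‖ := norm_pos_iff.mpr hne
  have e : ‖1 / (2 * ‖v‖)‖ * ‖v‖ = 1 / 2 := by
    rw [Real.norm_of_nonneg (by positivity)]; field_simp
  rw [e] at this
  norm_num at this

lemma summable_gauss (h : IsUnimodularLattice L) {t : ℝ} (ht : 0 < t) :
    Summable fun x : L ↦ Real.exp (-t * ‖(x : EuclideanSpace ℝ (Fin n))‖ ^ 2) := by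
  have := latt_discrete h
  set k := Module.finrank ℤ (latt L h) + 1 with hk
  have h1 := (ZLattice.summable_norm_pow_inv (latt L h) (2 * k) (by omega)).mul_left (k.factorial / t ^ k)
  have h2 : Summable fun x : latt L h ↦ Real.exp (-t * ‖(x : EuclideanSpace ℝ (Fin n))‖ ^ 2) := by
    refine Summable.of_norm_bounded_eventually h1 ?_
    have : ({0} : Set (latt L h))ᶜ ∈ Filter.cofinite := (Set.finite_singleton _).compl_mem_cofinite
    filter_upwards [this] with x hx
    have hx0 : 0 < ‖(x : EuclideanSpace ℝ (Fin n))‖ := norm_pos_iff.mpr (by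
      intro e; exact hx (Subtype.ext e))
    have h3 := Real.pow_div_factorial_le_exp (t * ‖(x : EuclideanSpace ℝ (Fin n))‖ ^ 2) (by positivity) k
    rw [Real.norm_of_nonneg (Real.exp_nonneg _), neg_mul, Real.exp_neg]
    have e : (k.factorial : ℝ) / t ^ k * ‖x‖⁻¹ ^ (2 * k) = ((t * ‖(x : EuclideanSpace ℝ (Fin n))‖ ^ 2) ^ k / k.factorial)⁻¹ := by
      rw [Submodule.coe_norm, inv_div, mul_pow, ← pow_mul, inv_pow]
      field_simp
    rw [e]
    exact inv_anti₀ (by positivity) h3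
  exact h2

lemma exists_basis (h : IsUnimodularLattice L) :
    ∃ b : Module.Basis (Fin n) ℝ (EuclideanSpace ℝ (Fin n)), (∀ m : Fin n → ℤ, b.equivFun.symm (rv m) ∈ L) ∧
      ∀ x ∈ L, ∃ m : Fin n → ℤ, x = b.equivFun.symm (rv m) := by
  have := latt_discrete h
  have : IsZLattice ℝ (latt L h) := ⟨latt_span h⟩
  have hf := ZLattice.module_free ℝ (latt L h)
  have hfin := ZLattice.module_finite ℝ (latt L h)
  have hr := ZLattice.rank ℝ (latt L h)
  rw [finrank_euclideanSpace_fin] at hr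
  let b0 : Module.Basis (Fin n) ℤ (latt L h) := Module.finBasisOfFinrankEq ℤ (latt L h) hr
  let b := b0.ofZLatticeBasis ℝ (latt L h)
  have key : ∀ m : Fin n → ℤ, b.equivFun.symm (rv m) = ((b0.equivFun.symm m : latt L h) : EuclideanSpace ℝ (Fin n)) := by
    intro m
    rw [Module.Basis.equivFun_symm_apply, Module.Basis.equivFun_symm_apply]
    simp only [rv, b, Module.Basis.ofZLatticeBasis_apply]
    push_cast
    refine Finset.sum_congr rfl fun i _ ↦ ?_
    rw [Int.cast_smul_eq_zsmul]
  refine ⟨b, fun m ↦ ?_, fun x hx ↦ ⟨b0.equivFun ⟨x, hx⟩, ?_⟩⟩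
  · rw [key]; exact (b0.equivFun.symm m).2
  · rw [key]; simp

/-- Vectors of a lattice with basis `b`. -/
def latEquiv (b : Module.Basis (Fin n) ℝ (EuclideanSpace ℝ (Fin n))) (h1 : ∀ m : Fin n → ℤ, b.equivFun.symm (rv m) ∈ L)
    (h2 : ∀ x ∈ L, ∃ m : Fin n → ℤ, x = b.equivFun.symm (rv m)) : (Fin n → ℤ) ≃ L :=
  Equiv.ofBijective (fun m ↦ ⟨b.equivFun.symm (rv m), h1 m⟩) ⟨by
    intro m k hmk
    have := b.equivFun.symm.injective (Subtype.ext_iff.mp hmk)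
    funext i
    have := congrFun this i
    simpa [rv] using this, by
    rintro ⟨x, hx⟩
    obtain ⟨m, rfl⟩ := h2 x hx
    exact ⟨m, rfl⟩⟩

lemma exists_dualEquiv (h : IsUnimodularLattice L) (b : Module.Basis (Fin n) ℝ (EuclideanSpace ℝ (Fin n))) (h1 : ∀ m : Fin n → ℤ, b.equivFun.symm (rv m) ∈ L)
    (h2 : ∀ x ∈ L, ∃ m : Fin n → ℤ, x = b.equivFun.symm (rv m)) : ∃ e : (Fin n → ℤ) ≃ L,
    ∀ k (x : Fin n → ℝ), ⟪(e k : EuclideanSpace ℝ (Fin n)), b.equivFun.symm x⟫ = ∑ i, (k i : ℝ) * x i := by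
  have hfun : ∀ k : Fin n → ℤ, ∃ y : EuclideanSpace ℝ (Fin n), ∀ x : Fin n → ℝ, ⟪y, b.equivFun.symm x⟫ = ∑ i, (k i : ℝ) * x i := by
    intro k
    let f : EuclideanSpace ℝ (Fin n) →ₗ[ℝ] ℝ := ∑ i, (k i : ℝ) • b.coord i
    refine ⟨(InnerProductSpace.toDual ℝ _).symm (LinearMap.toContinuousLinearMap f), fun x ↦ ?_⟩
    rw [InnerProductSpace.toDual_symm_apply]
    simp [f, LinearMap.sum_apply, Module.Basis.equivFun_symm_apply, Finsupp.single_apply]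
    exact Finset.sum_congr rfl fun i _ ↦ mul_comm _ _
  choose y hy using hfun
  have hyL : ∀ k, y k ∈ L := by
    intro k
    apply mem_of_inner h
    intro x hx
    obtain ⟨m, rfl⟩ := h2 x hx
    exact ⟨∑ i, k i * m i, by rw [hy]; push_cast; rfl⟩
  refine ⟨Equiv.ofBijective (fun k ↦ ⟨y k, hyL k⟩) ⟨?_, ?_⟩, fun k x ↦ hy k x⟩
  · intro k l hkl
    have e : y k = y l := Subtype.ext_iff.mp hkl
    funext i
    have h3 := hy k (Pi.single i 1)
    rw [e, hy l] at h3
    simp [Pi.single_apply] at h3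
    exact h3.symm
  · rintro ⟨x, hx⟩
    have : ∀ i, ∃ m : ℤ, ⟪x, b i⟫ = (m : ℝ) := by
      intro i
      apply inner_int h hx
      have := h1 (Pi.single i 1)
      rw [Module.Basis.equivFun_symm_apply] at this
      simpa [rv, Pi.single_apply] using this
    choose k hk using this
    refine ⟨k, Subtype.ext ?_⟩
    refine InnerProductSpace.ext_inner_right_basis b fun i ↦ ?_
    have := hy k (Pi.single i 1)
    rw [Module.Basis.equivFun_symm_apply] at this
    simp [Pi.single_apply] at this
    simp only [this, hk]

end lattice

end part7

section part8
open UpperHalfPlane ModularForm ModularFormClass MatrixGroups EisensteinSeries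

section lattice8
open MeasureTheory
variable {n : ℕ} {L : Set (EuclideanSpace ℝ (Fin n))}

/-- The Gaussian with parameter `τ`. -/
def gs (τ : ℍ) (x : EuclideanSpace ℝ (Fin n)) : ℂ := Complex.exp (Real.pi * Complex.I * τ * (‖x‖ : ℂ) ^ 2)

lemma gs_norm (τ : ℍ) (x : EuclideanSpace ℝ (Fin n)) : ‖gs τ x‖ = Real.exp (-(Real.pi * τ.im) * ‖x‖ ^ 2) := by
  rw [gs, Complex.norm_exp]
  congr 1
  have : (Real.pi * Complex.I * τ * (‖x‖ : ℂ) ^ 2 : ℂ) = ((Real.pi * ‖x‖ ^ 2 : ℝ) : ℂ) * (Complex.I * τ) := by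
    push_cast; ring
  rw [this, Complex.re_ofReal_mul]
  simp
  ring

lemma gs_summable (h : IsUnimodularLattice L) (τ : ℍ) : Summable fun x : L ↦ gs τ (x : EuclideanSpace ℝ (Fin n)) := by
  refine Summable.of_norm ?_
  simp_rw [gs_norm]
  exact summable_gauss h (mul_pos Real.pi_pos τ.im_pos)

lemma gs_summable_add (h : IsUnimodularLattice L) (τ : ℍ) (w : EuclideanSpace ℝ (Fin n)) :
    Summable fun x : L ↦ gs τ ((x : EuclideanSpace ℝ (Fin n)) + w) := by
  have hp : 0 < Real.pi * τ.im := mul_pos Real.pi_pos τ.im_pos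
  refine Summable.of_norm_bounded ((summable_gauss h (half_pos hp)).mul_left (Real.exp ((Real.pi * τ.im) * ‖w‖ ^ 2))) ?_
  intro x
  rw [gs_norm, ← Real.exp_add]
  apply Real.exp_le_exp.mpr
  have h1 : ‖(x : EuclideanSpace ℝ (Fin n))‖ ≤ ‖(x : EuclideanSpace ℝ (Fin n)) + w‖ + ‖w‖ := by
    simpa using norm_sub_le ((x : EuclideanSpace ℝ (Fin n)) + w) w
  have h2 : ‖(x : EuclideanSpace ℝ (Fin n))‖ ^ 2 ≤ 2 * ‖(x : EuclideanSpace ℝ (Fin n)) + w‖ ^ 2 + 2 * ‖w‖ ^ 2 := by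
    nlinarith [norm_nonneg (x : EuclideanSpace ℝ (Fin n)), sq_nonneg (‖(x : EuclideanSpace ℝ (Fin n)) + w‖ - ‖w‖), norm_nonneg ((x : EuclideanSpace ℝ (Fin n)) + w), norm_nonneg w]
  nlinarith

lemma neg_re (τ : ℍ) : 0 < (-(Real.pi * Complex.I * τ) : ℂ).re := by
  have : (-(Real.pi * Complex.I * τ) : ℂ) = ((-Real.pi : ℝ) : ℂ) * (Complex.I * τ) := by push_cast; ring
  rw [this, Complex.re_ofReal_mul]
  simp
  exact mul_pos Real.pi_pos τ.im_pos

lemma gs_inner_eq (τ : ℍ) (w v : EuclideanSpace ℝ (Fin n)) :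
    Complex.exp (-(-(Real.pi * Complex.I * τ)) * (‖v‖ : ℂ) ^ 2 + (-(2 * Real.pi * Complex.I)) * ((inner ℝ w v : ℝ) : ℂ)) =
      Complex.exp (-(2 * Real.pi * Complex.I * ((inner ℝ w v : ℝ) : ℂ))) * gs τ v := by
  rw [gs, ← Complex.exp_add]; congr 1; ring

lemma gs_integral (τ : ℍ) (w : EuclideanSpace ℝ (Fin n)) :
    ∫ v, Complex.exp (-(2 * Real.pi * Complex.I * ((inner ℝ w v : ℝ) : ℂ))) * gs τ v =
      (Complex.I / τ) ^ (n / 2 : ℂ) * gs (ModularGroup.S • τ) w := by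
  have h1 := GaussianFourier.integral_cexp_neg_mul_sq_norm_add (neg_re τ) (-(2 * Real.pi * Complex.I)) w
  simp_rw [gs_inner_eq] at h1
  have hτ : (τ : ℂ) ≠ 0 := ne_zero τ
  have hpi : (Real.pi : ℂ) ≠ 0 := by exact_mod_cast Real.pi_ne_zero
  rw [h1, finrank_euclideanSpace_fin, gs, S_coe]
  congr 2
  · field_simp
    rw [Complex.I_sq]
  · field_simp
    ring

lemma gs_integrable (τ : ℍ) : Integrable (gs τ : EuclideanSpace ℝ (Fin n) → ℂ) := by
  have h1 := GaussianFourier.integrable_cexp_neg_mul_sq_norm_add (neg_re τ) 0 (0 : EuclideanSpace ℝ (Fin n))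
  refine h1.congr (Filter.Eventually.of_forall fun v ↦ ?_)
  simp [gs]

lemma gs_continuous (τ : ℍ) : Continuous (gs τ : EuclideanSpace ℝ (Fin n) → ℂ) := by
  unfold gs
  fun_prop

theorem poisson_latt (h : IsUnimodularLattice L) : ∃ c : ℝ, 0 ≤ c ∧ ∀ (τ : ℍ) (w : EuclideanSpace ℝ (Fin n)),
    HasSum (fun y : L ↦ (c : ℂ) * (Complex.I / τ) ^ (n / 2 : ℂ) * (gs (ModularGroup.S • τ) (y : EuclideanSpace ℝ (Fin n)) *
      Complex.exp (2 * Real.pi * Complex.I * ((inner ℝ (y : EuclideanSpace ℝ (Fin n)) w : ℝ) : ℂ))))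
      (∑' x : L, gs τ ((x : EuclideanSpace ℝ (Fin n)) + w)) := by
  obtain ⟨b, h1, h2⟩ := exists_basis h
  obtain ⟨e, he⟩ := exists_dualEquiv h b h1 h2
  let φ : (Fin n → ℝ) ≃L[ℝ] EuclideanSpace ℝ (Fin n) := b.equivFun.symm.toContinuousLinearEquiv
  have hφ : ∀ x, φ x = b.equivFun.symm x := fun x ↦ rfl
  have hm : MeasurableEmbedding φ := φ.toHomeomorph.measurableEmbedding
  have hH : (Measure.map φ volume).IsAddHaarMeasure := φ.isAddHaarMeasure_map volume
  set d := (Measure.map φ volume).addHaarScalarFactor volume with hd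
  have hmap : Measure.map φ volume = d • volume := Measure.isAddLeftInvariant_eq_smul _ _
  refine ⟨d, d.2, fun τ w ↦ ?_⟩
  have hgint : ∀ k : Fin n → ℤ, ∫ x : Fin n → ℝ, Complex.exp (-(2 * Real.pi * Complex.I * ∑ i, (k i : ℂ) * x i)) * gs τ (φ x) =
      (d : ℂ) * ((Complex.I / τ) ^ (n / 2 : ℂ) * gs (ModularGroup.S • τ) (e k : EuclideanSpace ℝ (Fin n))) := by
    intro k
    rw [← gs_integral]
    have h3 := hm.integral_map (μ := volume) (fun v ↦ Complex.exp (-(2 * Real.pi * Complex.I * ((inner ℝ (e k : EuclideanSpace ℝ (Fin n)) v : ℝ) : ℂ))) * gs τ v)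
    rw [hmap, integral_smul_nnreal_measure] at h3
    simp_rw [hφ, he] at h3
    push_cast at h3
    simp_rw [hφ]
    rw [← h3]
    rfl
  obtain ⟨x0, rfl⟩ : ∃ x0, φ x0 = w := φ.surjective w
  have key := poisson_gen (fun x ↦ gs τ (φ x)) ((gs_continuous τ).comp φ.continuous) ?_ ?_ ?_ x0
  · simp_rw [hgint] at key
    have e1 : ∑' m : Fin n → ℤ, gs τ (φ (x0 + rv m)) = ∑' x : L, gs τ ((x : EuclideanSpace ℝ (Fin n)) + φ x0) := by
      rw [← (latEquiv b h1 h2).tsum_eq]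
      refine tsum_congr fun m ↦ ?_
      rw [map_add, add_comm]; rfl
    rw [e1] at key
    rw [← e.hasSum_iff]
    refine key.congr_fun fun k ↦ ?_
    simp only [Function.comp, hφ, he]
    push_cast
    ring
  · have h3 : Integrable (gs τ : EuclideanSpace ℝ (Fin n) → ℂ) (Measure.map φ volume) := by
      rw [hmap]; exact (gs_integrable τ).smul_measure_nnreal
    exact hm.integrable_map_iff.mp h3
  · intro K hK
    obtain ⟨M, hM⟩ := (hK.image_of_continuousOn ((φ.continuous.norm.pow 2).continuousOn (s := K))).bddAbove
    have hp : 0 < Real.pi * τ.im := mul_pos Real.pi_pos τ.im_pos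
    refine ⟨fun m ↦ Real.exp ((Real.pi * τ.im) * M) * Real.exp (-((Real.pi * τ.im) / 2) * ‖φ (rv m)‖ ^ 2), ?_, ?_⟩
    · apply Summable.mul_left
      have := (latEquiv b h1 h2).summable_iff.mpr (summable_gauss h (half_pos hp))
      exact this
    · intro x hx m
      have hxM : ‖φ x‖ ^ 2 ≤ M := hM (Set.mem_image_of_mem _ hx)
      beta_reduce
      rw [gs_norm, ← Real.exp_add]
      apply Real.exp_le_exp.mpr
      rw [map_add]
      have h1 : ‖φ (rv m)‖ ≤ ‖φ x + φ (rv m)‖ + ‖φ x‖ := by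
        simpa using norm_sub_le (φ x + φ (rv m)) (φ x)
      have h2 : ‖φ (rv m)‖ ^ 2 ≤ 2 * ‖φ x + φ (rv m)‖ ^ 2 + 2 * ‖φ x‖ ^ 2 := by
        nlinarith [norm_nonneg (φ (rv m)), sq_nonneg (‖φ x + φ (rv m)‖ - ‖φ x‖), norm_nonneg (φ x + φ (rv m)), norm_nonneg (φ x)]
      nlinarith
  · simp_rw [hgint]
    apply Summable.mul_left
    apply Summable.mul_left
    exact e.summable_iff.mpr (gs_summable h _)

end lattice8

end part8

section part9
open UpperHalfPlane ModularForm ModularFormClass MatrixGroups EisensteinSeries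

section lattice9
variable {L : Set (EuclideanSpace ℝ (Fin 36))}

lemma gs_I (x : EuclideanSpace ℝ (Fin 36)) : gs UpperHalfPlane.I x = ((Real.exp (-Real.pi * ‖x‖ ^ 2) : ℝ) : ℂ) := by
  rw [gs, UpperHalfPlane.coe_I]
  push_cast
  congr 1
  linear_combination (Real.pi * (‖x‖ : ℂ) ^ 2) * Complex.I_mul_I

lemma gs_I_ne (h : IsUnimodularLattice L) (w : EuclideanSpace ℝ (Fin 36)) : ∑' x : L, gs UpperHalfPlane.I ((x : EuclideanSpace ℝ (Fin 36)) + w) ≠ 0 := by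
  have hs := gs_summable_add h UpperHalfPlane.I w
  simp_rw [gs_I] at hs ⊢
  rw [← Complex.ofReal_tsum]
  have hs' := Complex.summable_ofReal.mp hs
  have : 0 < ∑' x : L, Real.exp (-Real.pi * ‖(x : EuclideanSpace ℝ (Fin 36)) + w‖ ^ 2) :=
    hs'.tsum_pos (fun _ ↦ (Real.exp_pos _).le) ⟨0, (latt L h).zero_mem⟩ (Real.exp_pos _)
  exact_mod_cast this.ne'

theorem poisson36 (h : IsUnimodularLattice L) (τ : ℍ) (w : EuclideanSpace ℝ (Fin 36)) :
    ∑' y : L, gs (ModularGroup.S • τ) (y : EuclideanSpace ℝ (Fin 36)) * Complex.exp (2 * Real.pi * Complex.I * ((inner ℝ (y : EuclideanSpace ℝ (Fin 36)) w : ℝ) : ℂ)) =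
      -(τ : ℂ) ^ 18 * ∑' x : L, gs τ ((x : EuclideanSpace ℝ (Fin 36)) + w) := by
  obtain ⟨c, hc, H⟩ := poisson_latt h
  have H' : ∀ (τ : ℍ) (w : EuclideanSpace ℝ (Fin 36)), -(τ : ℂ) ^ 18 * ∑' x : L, gs τ ((x : EuclideanSpace ℝ (Fin 36)) + w) = c * 
    ∑' y : L, gs (ModularGroup.S • τ) (y : EuclideanSpace ℝ (Fin 36)) * Complex.exp (2 * Real.pi * Complex.I * ((inner ℝ (y : EuclideanSpace ℝ (Fin 36)) w : ℝ) : ℂ)) := by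
    intro τ w
    rw [← (H τ w).tsum_eq, tsum_mul_left]
    have hτ : (τ : ℂ) ≠ 0 := ne_zero τ
    have e : (((36 : ℕ) : ℂ) / 2) = ((18 : ℕ) : ℂ) := by norm_num
    rw [e, Complex.cpow_natCast, div_pow]
    have hI : Complex.I ^ 18 = -1 := by
      rw [show 18 = 2 * 9 from rfl, pow_mul, Complex.I_sq]; norm_num
    rw [hI]
    field_simp
  have hSI : ModularGroup.S • UpperHalfPlane.I = UpperHalfPlane.I := by
    apply UpperHalfPlane.ext
    rw [S_coe, UpperHalfPlane.coe_I]
    rw [div_eq_iff Complex.I_ne_zero, Complex.I_mul_I]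
  have h1 := H' UpperHalfPlane.I 0
  rw [hSI] at h1
  simp only [inner_zero_right, Complex.ofReal_zero, mul_zero, Complex.exp_zero, mul_one] at h1
  have h2 := gs_I_ne h 0
  simp only [add_zero] at h1 h2
  have hI : Complex.I ^ 18 = -1 := by
      rw [show 18 = 2 * 9 from rfl, pow_mul, Complex.I_sq]; norm_num
  rw [UpperHalfPlane.coe_I, hI, neg_neg] at h1
  have hc1 : (c : ℂ) = 1 := (mul_right_cancel₀ h2 h1).symm
  rw [H' τ w, hc1, one_mul]

lemma exists_char (h : IsUnimodularLattice L) : ∃ w : EuclideanSpace ℝ (Fin 36), ∀ x ∈ L, ∃ k : ℤ, 2 * ⟪x, w⟫ = ‖x‖ ^ 2 + 2 * k := by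
  obtain ⟨b, h1, h2⟩ := exists_basis h
  obtain ⟨e, he⟩ := exists_dualEquiv h b h1 h2
  have hb : ∀ i, b i ∈ L := by
    intro i
    have := h1 (Pi.single i 1)
    rw [Module.Basis.equivFun_symm_apply] at this
    simpa [rv, Pi.single_apply] using this
  have hi : ∀ i, ∃ m : ℤ, ⟪b i, b i⟫ = (m : ℝ) := fun i ↦ inner_int h (hb i) (hb i)
  choose k hk using hi
  let w : EuclideanSpace ℝ (Fin 36) := (1 / 2 : ℝ) • (e k : EuclideanSpace ℝ (Fin 36))
  let H : AddSubgroup (EuclideanSpace ℝ (Fin 36)) :=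
    { carrier := {x | x ∈ L ∧ ∃ k : ℤ, 2 * ⟪x, w⟫ = ‖x‖ ^ 2 + 2 * k}
      zero_mem' := ⟨(latt L h).zero_mem, 0, by simp⟩
      add_mem' := by
        rintro x y ⟨hx, k, hk⟩ ⟨hy, l, hl⟩
        obtain ⟨m, hm⟩ := inner_int h hx hy
        refine ⟨(latt L h).add_mem hx hy, k + l - m, ?_⟩
        rw [inner_add_left, mul_add, hk, hl, norm_add_sq_real, hm]
        push_cast; ring
      neg_mem' := by
        rintro x ⟨hx, k, hk⟩
        obtain ⟨m, hm⟩ := inner_int h hx hx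
        rw [real_inner_self_eq_norm_sq] at hm
        refine ⟨(latt L h).neg_mem hx, -k - m, ?_⟩
        rw [inner_neg_left, mul_neg, hk, norm_neg]
        push_cast; rw [← hm]; ring }
  refine ⟨w, fun x hx ↦ ?_⟩
  obtain ⟨m, rfl⟩ := h2 x hx
  have : b.equivFun.symm (rv m) ∈ H := by
    rw [Module.Basis.equivFun_symm_apply]
    refine H.sum_mem fun i _ ↦ ?_
    have : rv m i • b i = m i • b i := by simp [rv, Int.cast_smul_eq_zsmul]
    rw [this]
    refine H.zsmul_mem ?_ _
    refine ⟨hb i, 0, ?_⟩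
    have h4 := he k (Pi.single i 1)
    rw [Module.Basis.equivFun_symm_apply] at h4
    simp [Pi.single_apply] at h4
    simp only [w]
    rw [inner_smul_right, real_inner_comm, h4, ← hk, real_inner_self_eq_norm_sq]
    simp
  exact this.2

lemma mem_shadow (h : IsUnimodularLattice L) (ho : IsOddLattice L) {w : EuclideanSpace ℝ (Fin 36)}
    (hw : ∀ x ∈ L, ∃ k : ℤ, 2 * ⟪x, w⟫ = ‖x‖ ^ 2 + 2 * k) (y : EuclideanSpace ℝ (Fin 36)) : y ∈ shadow L ↔ ∃ x ∈ L, y = x + w := by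
  constructor
  · rintro ⟨hy, hyL⟩
    have hodd : ∀ z ∈ L, ∀ m : ℤ, Odd m → ‖z‖ ^ 2 = m → ¬ ∃ k : ℤ, ⟪y, z⟫ = k := by
      rintro z hz m hm hzm ⟨k, hk⟩
      apply hyL
      apply mem_of_inner h
      intro v hv
      obtain ⟨a, ha⟩ := inner_int h hv hv
      rw [real_inner_self_eq_norm_sq] at ha
      rcases Int.even_or_odd a with ⟨r, hr⟩ | ho
      · exact hy v ⟨hv, r, by rw [normOf_eq, ha, hr]; push_cast; ring⟩
      · obtain ⟨r, hr⟩ := ho.sub_odd hm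
        obtain ⟨q, hq⟩ := inner_int h hv hz
        obtain ⟨l, hl⟩ := hy (v - z) ⟨(latt L h).sub_mem hv hz, r + m - q, by
          rw [normOf_eq, norm_sub_sq_real, ha, hzm, hq]
          have : (a : ℝ) - m = r + r := by exact_mod_cast hr
          push_cast; linarith⟩
        refine ⟨l + k, ?_⟩
        rw [inner_sub_right, hk] at hl
        push_cast; linarith
    refine ⟨y - w, ?_, by abel⟩
    apply mem_of_inner h
    intro z hz
    obtain ⟨a, ha⟩ := inner_int h hz hz
    rw [real_inner_self_eq_norm_sq] at ha
    obtain ⟨k, hk⟩ := hw z hz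
    rcases Int.even_or_odd a with ⟨r, hr⟩ | ho
    · obtain ⟨l, hl⟩ := hy z ⟨hz, r, by rw [normOf_eq, ha, hr]; push_cast; ring⟩
      refine ⟨l - r - k, ?_⟩
      rw [inner_sub_left, hl, real_inner_comm]
      rw [ha, hr] at hk
      push_cast at hk ⊢; linarith
    · have h2 := hodd z hz a ho ha
      obtain ⟨l, hl⟩ := hy (z + z) ⟨(latt L h).add_mem hz hz, 2 * a, by
        rw [normOf_eq, norm_add_sq_real, real_inner_self_eq_norm_sq, ha]; push_cast; ring⟩
      rw [inner_add_right] at hl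
      have hlo : Odd l := by
        rw [← Int.not_even_iff_odd]
        rintro ⟨r, hr⟩
        apply h2
        refine ⟨r, ?_⟩
        rw [hr] at hl; push_cast at hl; linarith
      obtain ⟨r, hr⟩ := hlo.sub_odd ho
      refine ⟨r - k, ?_⟩
      have : (l : ℝ) - a = r + r := by exact_mod_cast hr
      rw [inner_sub_left, real_inner_comm z w]
      rw [ha] at hk
      push_cast; linarith
  · rintro ⟨x, hx, rfl⟩
    refine ⟨?_, fun hxw ↦ ?_⟩
    · rintro z ⟨hz, m, hm⟩
      obtain ⟨k, hk⟩ := hw z hz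
      obtain ⟨l, hl⟩ := inner_int h hx hz
      refine ⟨l + m + k, ?_⟩
      rw [normOf_eq] at hm
      rw [inner_add_left, hl, real_inner_comm]
      push_cast; linarith
    · have hwL : w ∈ L := by
        have := (latt L h).sub_mem hxw hx
        rw [add_sub_cancel_left] at this; exact this
      obtain ⟨o, hoL, m, hm, hom⟩ := ho
      obtain ⟨k, hk⟩ := hw o hoL
      obtain ⟨l, hl⟩ := inner_int h hoL hwL
      rw [normOf_eq] at hom
      rw [hl, hom] at hk
      have : 2 * l = m + 2 * k := by exact_mod_cast hk
      obtain ⟨r, hr⟩ := hm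
      omega

lemma gs_T (τ : ℍ) (x : EuclideanSpace ℝ (Fin 36)) : gs (ModularGroup.T • τ) x = gs τ x * Complex.exp (Real.pi * Complex.I * (‖x‖ : ℂ) ^ 2) := by
  rw [gs, gs, ← Complex.exp_add, UpperHalfPlane.modular_T_smul, UpperHalfPlane.coe_vadd]
  congr 1
  push_cast
  ring

lemma exp_two_int (k : ℤ) (z : ℂ) : Complex.exp (z + 2 * Real.pi * Complex.I * k) = Complex.exp z := by
  rw [Complex.exp_add, show 2 * Real.pi * Complex.I * k = k * (2 * Real.pi * Complex.I) by ring,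
    Complex.exp_int_mul_two_pi_mul_I, mul_one]

lemma exp_char {w : EuclideanSpace ℝ (Fin 36)} (hw : ∀ x ∈ L, ∃ k : ℤ, 2 * ⟪x, w⟫ = ‖x‖ ^ 2 + 2 * k) (x : EuclideanSpace ℝ (Fin 36)) (hx : x ∈ L) :
    Complex.exp (2 * Real.pi * Complex.I * ((inner ℝ x w : ℝ) : ℂ)) = Complex.exp (Real.pi * Complex.I * (‖x‖ : ℂ) ^ 2) := by
  obtain ⟨k, hk⟩ := hw x hx
  have : (2 * ((inner ℝ x w : ℝ) : ℂ)) = (‖x‖ : ℂ) ^ 2 + 2 * k := by exact_mod_cast hk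
  rw [← exp_two_int k (Real.pi * Complex.I * (‖x‖ : ℂ) ^ 2)]
  congr 1
  linear_combination (Real.pi * Complex.I) * this

theorem latt_triple (h : IsUnimodularLattice L) {w : EuclideanSpace ℝ (Fin 36)} (hw : ∀ x ∈ L, ∃ k : ℤ, 2 * ⟪x, w⟫ = ‖x‖ ^ 2 + 2 * k) :
    IsTriple 18 (fun τ ↦ ∑' x : L, gs τ (x : EuclideanSpace ℝ (Fin 36)))
      (fun τ ↦ ∑' x : L, gs τ (x : EuclideanSpace ℝ (Fin 36)) * Complex.exp (2 * Real.pi * Complex.I * ((inner ℝ (x : EuclideanSpace ℝ (Fin 36)) w : ℝ) : ℂ)))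
      (fun τ ↦ ∑' x : L, gs τ ((x : EuclideanSpace ℝ (Fin 36)) + w)) := by
  set P : ℍ → ℂ := (fun τ ↦ ∑' x : L, gs τ (x : EuclideanSpace ℝ (Fin 36))) with hP
  set Q : ℍ → ℂ := (fun τ ↦ ∑' x : L, gs τ (x : EuclideanSpace ℝ (Fin 36)) * Complex.exp (2 * Real.pi * Complex.I * ((inner ℝ (x : EuclideanSpace ℝ (Fin 36)) w : ℝ) : ℂ))) with hQ
  set R : ℍ → ℂ := (fun τ ↦ ∑' x : L, gs τ ((x : EuclideanSpace ℝ (Fin 36)) + w)) with hR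
  have PT : ∀ τ, P (ModularGroup.T • τ) = Q τ := by
    intro τ
    refine tsum_congr fun x ↦ ?_
    rw [gs_T, exp_char hw _ x.2]
  have QT : ∀ τ, Q (ModularGroup.T • τ) = P τ := by
    intro τ
    refine tsum_congr fun x ↦ ?_
    rw [gs_T, exp_char hw _ x.2, mul_assoc, ← Complex.exp_add]
    obtain ⟨m, hm⟩ := inner_int h x.2 x.2
    rw [real_inner_self_eq_norm_sq] at hm
    have hm' : (‖(x : EuclideanSpace ℝ (Fin 36))‖ : ℂ) ^ 2 = m := by exact_mod_cast hm
    have := exp_two_int m 0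
    rw [zero_add, Complex.exp_zero] at this
    rw [hm', ← two_mul, ← mul_assoc, ← mul_assoc, this, mul_one]
  have PS : ∀ τ : ℍ, P (ModularGroup.S • τ) = -(τ : ℂ) ^ 18 * P τ := by
    intro τ
    have := poisson36 h τ 0
    simpa using this
  have QS : ∀ τ : ℍ, Q (ModularGroup.S • τ) = -(τ : ℂ) ^ 18 * R τ := fun τ ↦ poisson36 h τ w
  have hT : ∀ τ : ℍ, ((ModularGroup.T • τ : ℍ) : ℂ) = τ + 1 := by
    intro τ
    rw [UpperHalfPlane.modular_T_smul, UpperHalfPlane.coe_vadd]; push_cast; ring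
  refine ⟨PT, QT, ?_, PS, QS, ?_⟩
  · intro τ
    have hτ : (τ : ℂ) ≠ 0 := ne_zero τ
    have hτ1 : (τ : ℂ) + 1 ≠ 0 := by rw [← hT]; exact ne_zero _
    set s := ModularGroup.T • ModularGroup.S • ModularGroup.T • τ with hs
    have e0 : (s : ℂ) = τ / (τ + 1) := by
      rw [hs, hT, S_coe, hT]; field_simp; ring
    have e1 : ModularGroup.T • ModularGroup.S • s = ModularGroup.S • τ := by
      apply UpperHalfPlane.ext
      rw [hT, S_coe, S_coe, e0]; field_simp; ring
    have a1 := PS s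
    have a2 := QT (ModularGroup.S • s)
    rw [e1, QS] at a2
    rw [← a2, e0] at a1
    have a3 : P s = -(τ + 1 : ℂ) ^ 18 * R (ModularGroup.T • τ) := by
      rw [hs, PT, QS, hT]
    rw [a3] at a1
    rw [div_pow] at a1
    field_simp at a1
    exact a1.symm
  · intro τ
    have hτ : (τ : ℂ) ≠ 0 := ne_zero τ
    have := QS (ModularGroup.S • τ)
    rw [S_S, S_coe] at this
    rw [this, div_pow]
    field_simp

theorem w_odd (h : IsUnimodularLattice L) {w : EuclideanSpace ℝ (Fin 36)} (hw : ∀ x ∈ L, ∃ k : ℤ, 2 * ⟪x, w⟫ = ‖x‖ ^ 2 + 2 * k) :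
    ∃ m : ℤ, ‖w‖ ^ 2 = 2 * m + 1 := by
  have ht := (latt_triple h hw).RT UpperHalfPlane.I
  have h1 : ∑' x : L, gs (ModularGroup.T • UpperHalfPlane.I) ((x : EuclideanSpace ℝ (Fin 36)) + w) =
      (∑' x : L, gs UpperHalfPlane.I ((x : EuclideanSpace ℝ (Fin 36)) + w)) * Complex.exp (Real.pi * Complex.I * (‖w‖ : ℂ) ^ 2) := by
    rw [← tsum_mul_right]
    refine tsum_congr fun x ↦ ?_
    rw [gs_T]
    obtain ⟨k, hk⟩ := hw x x.2
    obtain ⟨m, hm⟩ := inner_int h x.2 x.2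
    rw [real_inner_self_eq_norm_sq] at hm
    have : ‖(x : EuclideanSpace ℝ (Fin 36)) + w‖ ^ 2 = ‖w‖ ^ 2 + 2 * (m + k) := by
      rw [norm_add_sq_real, hk, hm]; ring
    have : (‖(x : EuclideanSpace ℝ (Fin 36)) + w‖ : ℂ) ^ 2 = (‖w‖ : ℂ) ^ 2 + 2 * (m + k) := by exact_mod_cast this
    rw [this, ← exp_two_int (m + k) (Real.pi * Complex.I * (‖w‖ : ℂ) ^ 2)]
    congr 2
    push_cast; ring
  rw [h1] at ht
  have h2 := gs_I_ne h w
  have h3 : Complex.exp (Real.pi * Complex.I * (‖w‖ : ℂ) ^ 2) = Complex.exp (Real.pi * Complex.I) := by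
    rw [Complex.exp_pi_mul_I]
    apply mul_left_cancel₀ h2
    rw [ht]; ring
  obtain ⟨m, hm⟩ := Complex.exp_eq_exp_iff_exists_int.mp h3
  refine ⟨m, ?_⟩
  have hpi : (Real.pi * Complex.I : ℂ) ≠ 0 := mul_ne_zero (by exact_mod_cast Real.pi_ne_zero) Complex.I_ne_zero
  have : (‖w‖ : ℂ) ^ 2 = 2 * m + 1 := by
    apply mul_left_cancel₀ hpi
    linear_combination hm
  exact_mod_cast this

end lattice9

end part9

section part10
open UpperHalfPlane ModularForm ModularFormClass MatrixGroups EisensteinSeries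

lemma gs_xx {n : ℕ} (τ : ℍ) (x : EuclideanSpace ℝ (Fin n)) {m : ℕ} (hm : ‖x‖ ^ 2 = m) : gs τ x = xx τ ^ m := by
  have : (‖x‖ : ℂ) ^ 2 = m := by exact_mod_cast hm
  rw [gs, this, xx_eq, ← Complex.exp_nat_mul]
  congr 1; ring

lemma ps_split (p : PowerSeries ℂ) (k : ℕ) (q : PowerSeries ℂ) (hq : ∀ m < k, PowerSeries.coeff m p = PowerSeries.coeff m q) :
    ∃ r, p = q + PowerSeries.X ^ k * r := by
  have : PowerSeries.X ^ k ∣ p - q := by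
    rw [PowerSeries.X_pow_dvd_iff]
    intro m hm
    rw [map_sub, hq m hm, sub_self]
  obtain ⟨r, hr⟩ := this
  exact ⟨r, by rw [← hr]; ring⟩

theorem kissing_aux {L : Set (EuclideanSpace ℝ (Fin 36))} (huni : IsUnimodularLattice L) (hodd : IsOddLattice L) (hmin : HasMinNorm L 3) : numVecsOfNorm L 3 ≤ 960 ∧ (numVecsOfNorm L 3 = 960 ↔ HasSigma L 20) := by
  obtain ⟨w, hw⟩ := exists_char huni
  have ht := latt_triple huni hw
  obtain ⟨wm, hwm⟩ := w_odd huni hw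
  have hsh := mem_shadow huni hodd hw
  have hN : ∀ x : L, ∃ m : ℕ, ‖(x : EuclideanSpace ℝ (Fin 36))‖ ^ 2 = m := by
    intro x
    obtain ⟨m, hm⟩ := inner_int huni x.2 x.2
    rw [real_inner_self_eq_norm_sq] at hm
    have : 0 ≤ m := by
      have : (0 : ℝ) ≤ m := by rw [← hm]; positivity
      exact_mod_cast this
    lift m to ℕ using this
    exact ⟨m, by simpa using hm⟩
  have hM : ∀ x : L, ∃ m : ℕ, Odd m ∧ ‖(x : EuclideanSpace ℝ (Fin 36)) + w‖ ^ 2 = m := by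
    intro x
    obtain ⟨m, hm⟩ := hN x
    obtain ⟨k, hk⟩ := hw x x.2
    have h1 : ‖(x : EuclideanSpace ℝ (Fin 36)) + w‖ ^ 2 = ((2 * (m + k + wm) + 1 : ℤ) : ℝ) := by
      rw [norm_add_sq_real, hk, hm, hwm]; push_cast; ring
    have h2 : (0 : ℤ) ≤ 2 * (m + k + wm) + 1 := by
      have : (0 : ℝ) ≤ ((2 * (m + k + wm) + 1 : ℤ) : ℝ) := by rw [← h1]; positivity
      exact_mod_cast this
    obtain ⟨l, hl⟩ := Int.eq_ofNat_of_zero_le h2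
    refine ⟨l, ?_, ?_⟩
    · rw [Nat.odd_iff]; omega
    · rw [h1, hl]; simp
  choose N hN using hN
  choose M hMo hM using hM
  have hPs : ∀ τ : ℍ, HasSum (fun x : L ↦ xx τ ^ N x) (∑' x : L, gs τ (x : EuclideanSpace ℝ (Fin 36))) := by
    intro τ
    exact (gs_summable huni τ).hasSum.congr_fun fun x ↦ (gs_xx τ _ (hN x)).symm
  have hRs : ∀ τ : ℍ, HasSum (fun x : L ↦ xx τ ^ M x) (∑' x : L, gs τ ((x : EuclideanSpace ℝ (Fin 36)) + w)) := by
    intro τ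
    exact (gs_summable_add huni τ w).hasSum.congr_fun fun x ↦ (gs_xx τ _ (hM x)).symm
  have hP := HasQ.of_fiber hPs
  have hR := HasQ.of_fiber hRs
  have hfR := fiber_finite hRs
  have h0L : (0 : EuclideanSpace ℝ (Fin 36)) ∈ L := (latt L huni).zero_mem
  -- coefficients of the theta series
  have hpos : ∀ x : L, (x : EuclideanSpace ℝ (Fin 36)) ≠ 0 → 3 ≤ N x := by
    intro x hx
    have := hmin.2 ⟨x, x.2, hx, rfl⟩
    rw [normOf_eq, hN] at this
    exact_mod_cast this
  have hN0 : N ⟨0, h0L⟩ = 0 := by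
    have := hN ⟨0, h0L⟩
    simp at this
    exact_mod_cast this.symm
  have hP0 : Nat.card {x : L // N x = 0} = 1 := by
    rw [Nat.card_eq_one_iff_unique]
    refine ⟨⟨?_⟩, ⟨⟨⟨0, h0L⟩, hN0⟩⟩⟩
    have key : ∀ x : L, N x = 0 → (x : EuclideanSpace ℝ (Fin 36)) = 0 := by
      intro x hx
      by_contra hne
      have := hpos x hne
      omega
    rintro ⟨x, hx⟩ ⟨y, hy⟩
    exact Subtype.ext (Subtype.ext ((key x hx).trans (key y hy).symm))
  have hP12 : ∀ m, m = 1 ∨ m = 2 → Nat.card {x : L // N x = m} = 0 := by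
    intro m hm
    have : IsEmpty {x : L // N x = m} := by
      constructor
      rintro ⟨x, hx⟩
      by_cases h0 : (x : EuclideanSpace ℝ (Fin 36)) = 0
      · have : x = ⟨0, h0L⟩ := Subtype.ext h0
        rw [this, hN0] at hx; omega
      · have := hpos x h0; omega
    exact Nat.card_of_isEmpty
  have hP3 : Nat.card {x : L // N x = 3} = numVecsOfNorm L 3 := by
    rw [numVecsOfNorm, ← Nat.card_coe_set_eq]
    refine Nat.card_congr
      { toFun := fun x ↦ ⟨x.1.1, x.1.2, by rw [normOf_eq, hN, x.2]; norm_num⟩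
        invFun := fun x ↦ ⟨⟨x.1, x.2.1⟩, by
          have h1 := x.2.2
          rw [normOf_eq] at h1
          have h2 := hN ⟨x.1, x.2.1⟩
          rw [h1] at h2
          exact_mod_cast h2.symm⟩
        left_inv := fun x ↦ rfl
        right_inv := fun x ↦ rfl }
  have hReven : ∀ m, Even m → Nat.card {x : L // M x = m} = 0 := by
    intro m hm
    have : IsEmpty {x : L // M x = m} := by
      constructor
      rintro ⟨x, hx⟩
      have := hMo x
      rw [hx] at this
      exact (Nat.not_odd_iff_even.mpr hm) this
    exact Nat.card_of_isEmpty
  obtain ⟨p, hp⟩ := ps_split (PowerSeries.mk fun m ↦ (Nat.card {x : L // N x = m} : ℂ)) 4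
    (1 + PowerSeries.C (numVecsOfNorm L 3 : ℂ) * PowerSeries.X ^ 3) (by
      intro m hm
      interval_cases m <;> simp only [map_add, PowerSeries.coeff_C_mul, PowerSeries.coeff_mk, hP0, hP12 1 (Or.inl rfl), hP12 2 (Or.inr rfl), hP3] <;>
        simp [PowerSeries.coeff_one, PowerSeries.coeff_X_pow])
  rw [hp] at hP
  set r1 := Nat.card {x : L // M x = 1} with hr1
  set r3 := Nat.card {x : L // M x = 3} with hr3
  obtain ⟨r, hr⟩ := ps_split (PowerSeries.mk fun m ↦ (Nat.card {x : L // M x = m} : ℂ)) 4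
    (PowerSeries.C (r1 : ℂ) * PowerSeries.X + PowerSeries.C (r3 : ℂ) * PowerSeries.X ^ 3) (by
      intro m hm
      interval_cases m <;> simp only [map_add, PowerSeries.coeff_C_mul, PowerSeries.coeff_mk, hReven 0 (by decide), hReven 2 (by decide), ← hr1, ← hr3] <;>
        simp [PowerSeries.coeff_X, PowerSeries.coeff_X_pow])
  have hR' := hR
  rw [hr] at hR'
  have rel := ht.rel1 hP hR'
  have rel' : numVecsOfNorm L 3 + r3 + 60 * r1 = 960 := by exact_mod_cast rel
  have hempty : ∀ m, Nat.card {x : L // M x = m} = 0 → ∀ x, M x ≠ m := by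
    intro m hm x hx
    have := hfR m
    rw [Finite.card_eq_zero_iff] at hm
    exact hm.false ⟨x, hx⟩
  refine ⟨by omega, ?_, ?_⟩
  · intro h960
    have hz1 : Nat.card {x : L // M x = 1} = 0 := by omega
    have hz3 : Nat.card {x : L // M x = 3} = 0 := by omega
    have h5 : ∃ x, M x = 5 := by
      by_contra hno
      push Not at hno
      have hz5 : Nat.card {x : L // M x = 5} = 0 := by
        have : IsEmpty {x : L // M x = 5} := ⟨fun x ↦ hno x.1 x.2⟩
        exact Nat.card_of_isEmpty
      obtain ⟨s, hs⟩ := ps_split (PowerSeries.mk fun m ↦ (Nat.card {x : L // M x = m} : ℂ)) 6 0 (by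
        intro m hm
        interval_cases m <;> simp only [PowerSeries.coeff_mk, hReven 0 (by decide), hReven 2 (by decide), hReven 4 (by decide), hz1, hz3, hz5] <;> simp)
      rw [hs, zero_add] at hR
      exact ht.rel2 hP hR
    obtain ⟨x, hx⟩ := h5
    refine ⟨5, ⟨⟨x + w, (hsh _).mpr ⟨x, x.2, rfl⟩, by rw [normOf_eq, hM, hx]; norm_num⟩, ?_⟩, by norm_num⟩
    rintro s ⟨y, hy, rfl⟩
    obtain ⟨z, hz, rfl⟩ := (hsh y).mp hy
    rw [normOf_eq, hM ⟨z, hz⟩]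
    have a1 := hempty 1 hz1 ⟨z, hz⟩
    have a3 := hempty 3 hz3 ⟨z, hz⟩
    have ao := hMo ⟨z, hz⟩
    rw [Nat.odd_iff] at ao
    have : 5 ≤ M ⟨z, hz⟩ := by omega
    exact_mod_cast this
  · rintro ⟨s, hs, hs20⟩
    have hs5 : s = 5 := by linarith
    subst hs5
    have hge : ∀ x, 5 ≤ M x := by
      intro x
      have := hs.2 ⟨x + w, (hsh _).mpr ⟨x, x.2, rfl⟩, rfl⟩
      rw [normOf_eq, hM] at this
      exact_mod_cast this
    have hz : ∀ m, m < 5 → Nat.card {x : L // M x = m} = 0 := by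
      intro m hm
      have : IsEmpty {x : L // M x = m} := ⟨fun x ↦ by have := hge x.1; have := x.2; omega⟩
      exact Nat.card_of_isEmpty
    have := hz 1 (by norm_num)
    have := hz 3 (by norm_num)
    omega

end part10

theorem kissing_number_bound_dim36 {L : Set (EuclideanSpace ℝ (Fin 36))}
    (huni : IsUnimodularLattice L) (hodd : IsOddLattice L) (hmin : HasMinNorm L 3) :
    numVecsOfNorm L 3 ≤ 960 ∧ (numVecsOfNorm L 3 = 960 ↔ HasSigma L 20) := by
  exact kissing_aux huni hodd hmin
end
end

section
/- Let C be a self-dual ℤ₄-code of length 36 such that the residue code C⁽¹⁾ is a binary doubly even [36,6,16] code and the torsion code C⁽²⁾ has minimum weight 3. Then A₄(C) is an (odd) unimodular lattice with min(A₄(C)) = 3 and σ(A₄(C)) = 20. -/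
open scoped RealInnerProductSpace

noncomputable section

/-- The dual code `B⊥ = {x ∈ F₂ⁿ : x·y = 0 for all y ∈ B}`. -/
def dualCode {n : ℕ} (B : Submodule (ZMod 2) (Fin n → ZMod 2)) : Set (Fin n → ZMod 2) :=
  {x | ∀ y ∈ B, ∑ i, x i * y i = 0}

/-- A binary code is doubly even if every codeword has Hamming weight divisible by 4. -/
def IsDoublyEven {n : ℕ} (B : Submodule (ZMod 2) (Fin n → ZMod 2)) : Prop :=
  ∀ c ∈ B, 4 ∣ hammingNorm c

/-- A set of binary words has minimum weight `d`:
`d` is the least Hamming weight among its nonzero elements. -/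
def HasMinWeight {n : ℕ} (S : Set (Fin n → ZMod 2)) (d : ℕ) : Prop :=
  IsLeast {w : ℕ | ∃ c ∈ S, c ≠ 0 ∧ hammingNorm c = w} d

/-- The number of words of Hamming weight `w` in `S`. -/
def weightCount {n : ℕ} (S : Set (Fin n → ZMod 2)) (w : ℕ) : ℕ :=
  Set.ncard {c ∈ S | hammingNorm c = w}

/-- The dual of a `ℤ₄`-code: `C⊥ = {x ∈ ℤ₄ⁿ : x·y = 0 for all y ∈ C}`. -/
def dualZ4 {n : ℕ} (C : Submodule (ZMod 4) (Fin n → ZMod 4)) : Set (Fin n → ZMod 4) :=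
  {x | ∀ y ∈ C, ∑ i, x i * y i = 0}

/-- Reduction modulo 2 of a `ℤ₄`-word. -/
def toBinary {n : ℕ} (c : Fin n → ZMod 4) : Fin n → ZMod 2 :=
  fun i => ZMod.castHom (by norm_num : (2 : ℕ) ∣ 4) (ZMod 2) (c i)

/-- The residue code `C⁽¹⁾ = {c mod 2 : c ∈ C}`. -/
def residueCode {n : ℕ} (C : Submodule (ZMod 4) (Fin n → ZMod 4)) : Set (Fin n → ZMod 2) :=
  {b | ∃ c ∈ C, b = toBinary c}

/-- The torsion code `C⁽²⁾ = {c mod 2 : c ∈ ℤ₄ⁿ, 2c ∈ C}`. -/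
def torsionCode {n : ℕ} (C : Submodule (ZMod 4) (Fin n → ZMod 4)) : Set (Fin n → ZMod 2) :=
  {b | ∃ c : Fin n → ZMod 4, (2 : ZMod 4) • c ∈ C ∧ b = toBinary c}

/-- Construction A: `A₄(C) = (1/2)·{x ∈ ℤⁿ : (x mod 4) ∈ C}`. -/
def constructionA4 {n : ℕ} (C : Submodule (ZMod 4) (Fin n → ZMod 4)) :
    Set (EuclideanSpace ℝ (Fin n)) :=
  {v | ∃ x : Fin n → ℤ, (fun i => (x i : ZMod 4)) ∈ C ∧ ∀ i, v i = (x i : ℝ) / 2}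

open Finset

def InL {n : ℕ} (C : Submodule (ZMod 4) (Fin n → ZMod 4)) (x : Fin n → ℤ) : Prop :=
  (fun i => (x i : ZMod 4)) ∈ C

def vec {n : ℕ} (x : Fin n → ℤ) : EuclideanSpace ℝ (Fin n) :=
  WithLp.toLp 2 (fun i => (x i : ℝ) / 2)

section
variable {n : ℕ} {C : Submodule (ZMod 4) (Fin n → ZMod 4)}

lemma inner_vec (x y : Fin n → ℤ) :
    ⟪vec x, vec y⟫ = ((∑ i, x i * y i : ℤ) : ℝ) / 4 := by
  simp only [vec, PiLp.inner_apply]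
  push_cast
  rw [Finset.sum_div]
  refine Finset.sum_congr rfl fun i _ => ?_
  simp
  ring

lemma normOf_vec (x : Fin n → ℤ) : normOf (vec x) = ((∑ i, x i * x i : ℤ) : ℝ) / 4 :=
  inner_vec x x

lemma mem_A4 {v : EuclideanSpace ℝ (Fin n)} :
    v ∈ constructionA4 C ↔ ∃ x, InL C x ∧ v = vec x := by
  constructor
  · rintro ⟨x, hx, h⟩
    exact ⟨x, hx, by ext i; simpa [vec] using h i⟩
  · rintro ⟨x, hx, rfl⟩
    exact ⟨x, hx, fun i => rfl⟩

lemma vec_mem {x : Fin n → ℤ} (h : InL C x) : vec x ∈ constructionA4 C := mem_A4.2 ⟨x, h, rfl⟩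

lemma InL.add {x y : Fin n → ℤ} (hx : InL C x) (hy : InL C y) : InL C (fun i => x i + y i) := by
  have := C.add_mem hx hy
  simpa [InL, Pi.add_def] using this

lemma InL.sub {x y : Fin n → ℤ} (hx : InL C x) (hy : InL C y) : InL C (fun i => x i - y i) := by
  have := C.sub_mem hx hy
  simpa [InL, Pi.sub_def] using this

lemma InL.four (j : Fin n) : InL C (fun i => if i = j then 4 else 0) := by
  have : (fun i => (((if i = j then 4 else 0 : ℤ)) : ZMod 4)) = 0 := by
    ext i
    by_cases h : i = j
    · simp [h]; rfl
    · simp [h]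
  unfold InL
  rw [this]
  exact C.zero_mem

lemma InL.dvd (hsd : (C : Set (Fin n → ZMod 4)) = dualZ4 C) {x y : Fin n → ℤ}
    (hx : InL C x) (hy : InL C y) : (4 : ℤ) ∣ ∑ i, x i * y i := by
  have h : (fun i => (x i : ZMod 4)) ∈ dualZ4 C := hsd ▸ hx
  have h2 := h _ hy
  have := (ZMod.intCast_zmod_eq_zero_iff_dvd (∑ i, x i * y i) 4).1 (by push_cast; exact h2)
  exact_mod_cast this

lemma lift4 (c : Fin n → ZMod 4) : ∃ x : Fin n → ℤ, (fun i => (x i : ZMod 4)) = c :=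
  ⟨fun i => (c i).val, by ext i; simp⟩

lemma toBinary_lift (x : Fin n → ℤ) :
    toBinary (fun i => (x i : ZMod 4)) = fun i => (x i : ZMod 2) := by
  ext i; simp only [toBinary, map_intCast]

lemma InL_of_dvd (hsd : (C : Set (Fin n → ZMod 4)) = dualZ4 C) {x : Fin n → ℤ}
    (h : ∀ y, InL C y → (4 : ℤ) ∣ ∑ i, x i * y i) : InL C x := by
  have : (fun i => (x i : ZMod 4)) ∈ dualZ4 C := by
    intro c hc
    obtain ⟨y, rfl⟩ := lift4 c
    have := (ZMod.intCast_zmod_eq_zero_iff_dvd (∑ i, x i * y i) 4).2 (by exact_mod_cast h y hc)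
    push_cast at this
    exact this
  rw [← hsd] at this
  exact this

lemma vec_of_int {v : EuclideanSpace ℝ (Fin n)}
    (h : ∀ j : Fin n, ∃ m : ℤ, ⟪v, vec (fun i => if i = j then 4 else 0)⟫ = (m : ℝ)) :
    ∃ w, v = vec w := by
  choose w hw using h
  refine ⟨w, ?_⟩
  ext j
  have := hw j
  simp only [vec, PiLp.inner_apply] at this
  rw [Finset.sum_eq_single j] at this
  · simp at this
    simp only [vec]
    linarith
  · intro i _ hi; simp [hi]
  · simp

lemma unimod (hsd : (C : Set (Fin n → ZMod 4)) = dualZ4 C) :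
    IsUnimodularLattice (constructionA4 C) := by
  apply Set.Subset.antisymm
  · rintro v hv y hy
    obtain ⟨x, hx, rfl⟩ := mem_A4.1 hv
    obtain ⟨y, hy', rfl⟩ := mem_A4.1 hy
    obtain ⟨k, hk⟩ := hx.dvd hsd hy'
    exact ⟨k, by rw [inner_vec, hk]; push_cast; ring⟩
  · intro v hv
    obtain ⟨w, rfl⟩ := vec_of_int (fun j => hv _ (vec_mem (InL.four j)))
    refine vec_mem (InL_of_dvd hsd fun y hy => ?_)
    obtain ⟨m, hm⟩ := hv _ (vec_mem hy)
    rw [inner_vec] at hm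
    refine ⟨m, ?_⟩
    have : ((∑ i, w i * y i : ℤ) : ℝ) = ((4 * m : ℤ) : ℝ) := by push_cast at hm ⊢; linarith
    exact_mod_cast this

lemma dvd2_iff (a : ℤ) : (2 : ℤ) ∣ a ↔ (a : ZMod 2) = 0 := by
  rw [ZMod.intCast_zmod_eq_zero_iff_dvd]; rfl

/-- facts about the residue code -/
lemma exists_lift {B : Submodule (ZMod 2) (Fin n → ZMod 2)}
    (hB : (B : Set (Fin n → ZMod 2)) = residueCode C) {b} (hb : b ∈ B) :
    ∃ x, InL C x ∧ ∀ i, (x i : ZMod 2) = b i := by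
  have : b ∈ residueCode C := hB ▸ hb
  obtain ⟨c, hc, rfl⟩ := this
  obtain ⟨x, rfl⟩ := lift4 c
  exact ⟨x, hc, fun i => by rw [toBinary_lift]⟩

lemma res_mem {B : Submodule (ZMod 2) (Fin n → ZMod 2)}
    (hB : (B : Set (Fin n → ZMod 2)) = residueCode C) {x} (hx : InL C x) :
    (fun i => (x i : ZMod 2)) ∈ B := by
  have : (fun i => (x i : ZMod 2)) ∈ residueCode C := ⟨_, hx, (toBinary_lift x).symm⟩
  rw [← hB] at this
  exact this

lemma two_mul_InL (hsd : (C : Set (Fin n → ZMod 4)) = dualZ4 C)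
    {B : Submodule (ZMod 2) (Fin n → ZMod 2)}
    (hB : (B : Set (Fin n → ZMod 2)) = residueCode C) {t : Fin n → ℤ}
    (ht : ∀ b ∈ B, ∑ i, (t i : ZMod 2) * b i = 0) : InL C (fun i => 2 * t i) := by
  apply InL_of_dvd hsd
  intro y hy
  have h := ht _ (res_mem hB hy)
  have h2 : (2 : ℤ) ∣ ∑ i, t i * y i := by rw [dvd2_iff]; push_cast; exact h
  obtain ⟨k, hk⟩ := h2
  refine ⟨k, ?_⟩
  simp only [mul_assoc, ← Finset.mul_sum, hk]
  ring

lemma tor_iff {t : Fin n → ℤ} : (InL C (fun i => 2 * t i)) →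
    (fun i => (t i : ZMod 2)) ∈ torsionCode C := by
  intro h
  refine ⟨fun i => (t i : ZMod 4), ?_, (toBinary_lift t).symm⟩
  have : (2 : ZMod 4) • (fun i => (t i : ZMod 4)) = fun i => ((2 * t i : ℤ) : ZMod 4) := by
    ext i; simp
  rw [this]; exact h

lemma sum_mod8 (z : Fin n → ℤ) (hz : ∀ i, z i % 2 = 1) : (8 : ℤ) ∣ (∑ i, z i * z i) - n := by
  have : (∑ i, z i * z i) - n = ∑ i, (z i * z i - 1) := by simp
  rw [this]
  refine Finset.dvd_sum fun i _ => ?_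
  have := Int.sq_mod_four_eq_one_of_odd (Int.odd_iff.2 (hz i))
  have h8 := Int.eight_dvd_sq_sub_one_of_odd (Int.odd_iff.2 (hz i))
  rwa [sq] at h8

/-- characteristic condition gives norm mod 8. -/
lemma char_mod8 (x w : Fin n → ℤ) (hz : ∀ i, (w i - x i) % 2 = 1) :
    (8 : ℤ) ∣ (∑ i, w i * w i) - (2 * ∑ i, x i * w i) + (∑ i, x i * x i) - n := by
  have := sum_mod8 (fun i => w i - x i) hz
  convert this using 2
  rw [Finset.mul_sum, ← Finset.sum_sub_distrib, ← Finset.sum_add_distrib]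
  exact Finset.sum_congr rfl fun i _ => by ring

lemma double_dual (B : Submodule (ZMod 2) (Fin n → ZMod 2)) (z : Fin n → ZMod 2)
    (hz : ∀ t : Fin n → ZMod 2, (∀ b ∈ B, ∑ i, t i * b i = 0) → ∑ i, t i * z i = 0) :
    z ∈ B := by
  by_contra h
  obtain ⟨f, hf, hfB⟩ := Submodule.exists_le_ker_of_notMem h
  have key : ∀ v, f v = ∑ i, f (Pi.single i 1) * v i := by
    intro v
    conv_lhs => rw [pi_eq_sum_univ' v]
    simp [map_sum, mul_comm, Pi.single]
  apply hf
  rw [key]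
  exact hz _ fun b hb => by rw [← key]; exact hfB hb

end

def chi (a : ZMod 2) : ℤ := if a = 0 then 1 else -1

lemma chi_mul_self (a : ZMod 2) : chi a * chi a = 1 := by revert a; decide
lemma chi_flip (a c b d : ZMod 2) (h : b ≠ d) :
    chi (a + b) * chi (c + d) = - (chi a * chi c) := by revert a c b d; decide

lemma hamming_sum {n : ℕ} (b : Fin n → ZMod 2) :
    (hammingNorm b : ℤ) = ∑ i, if b i ≠ 0 then 1 else 0 := by
  rw [Finset.sum_boole]; rfl

lemma sum_chi {n : ℕ} (b : Fin n → ZMod 2) : ∑ i, chi (b i) = n - 2 * (hammingNorm b : ℤ) := by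
  have h1 : (hammingNorm b : ℤ) = ∑ i, if b i ≠ 0 then 1 else 0 := hamming_sum b
  have h2 : ∀ i, chi (b i) = 1 - 2 * (if b i ≠ 0 then 1 else 0) := by
    intro i; unfold chi; split_ifs <;> simp_all
  rw [h1, Finset.mul_sum, Finset.sum_congr rfl (fun i _ => h2 i), Finset.sum_sub_distrib]
  simp

lemma weights (B : Submodule (ZMod 2) (Fin 36 → ZMod 2))
    (hr : Module.finrank (ZMod 2) B = 6) (hde : IsDoublyEven B)
    (hmin : HasMinWeight (B : Set (Fin 36 → ZMod 2)) 16)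
    (hdist : ∀ i j : Fin 36, i ≠ j → ∃ b ∈ B, b i ≠ b j) :
    ∀ b ∈ B, b = 0 ∨ hammingNorm b = 16 ∨ hammingNorm b = 20 := by
  classical
  have : Fintype B := Fintype.ofFinite B
  have hcard : Fintype.card B = 64 := by
    rw [Module.card_eq_pow_finrank (K := ZMod 2), hr, ZMod.card]; rfl
  have hzero : ∀ i j : Fin 36, i ≠ j → ∑ b : B, chi (b.1 i) * chi (b.1 j) = 0 := by
    intro i j hij
    obtain ⟨c, hc, hcij⟩ := hdist i j hij
    have := Equiv.sum_comp (Equiv.addRight (⟨c, hc⟩ : B)) (fun b : B => chi (b.1 i) * chi (b.1 j))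
    simp only [Equiv.coe_addRight, Submodule.coe_add, Pi.add_apply, chi_flip _ _ _ _ hcij,
      Finset.sum_neg_distrib] at this
    linarith
  have hS : ∑ b : B, (∑ i, chi (b.1 i)) ^ 2 = 36 * 64 := by
    simp only [sq, Finset.sum_mul_sum]
    rw [Finset.sum_comm]
    have : ∀ i : Fin 36, ∑ b : B, ∑ j, chi (b.1 i) * chi (b.1 j) = 64 := by
      intro i
      rw [Finset.sum_comm, Finset.sum_eq_single i]
      · simp [chi_mul_self, hcard]
      · intro j _ hj; exact hzero i j hj.symm
      · simp
    rw [Finset.sum_congr rfl (fun i _ => this i)]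
    simp
  have hT : ∑ b : B, ((∑ i, chi (b.1 i)) ^ 2 - 16) = 1280 := by
    rw [Finset.sum_sub_distrib, hS]
    simp [hcard]
  rw [← Finset.add_sum_erase _ _ (Finset.mem_univ (0 : B))] at hT
  have h0 : (∑ i : Fin 36, chi ((0 : B).1 i)) ^ 2 - 16 = 1280 := by
    simp [chi]
  have hE : ∑ b ∈ Finset.univ.erase (0 : B), ((∑ i, chi (b.1 i)) ^ 2 - 16) = 0 := by
    linarith
  have hform : ∀ b ∈ B, b ≠ 0 → (∃ k : ℕ, 4 ≤ k ∧ hammingNorm b = 4 * k) := by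
    intro b hb hb0
    obtain ⟨k, hk⟩ := hde b hb
    have := hmin.2 ⟨b, hb, hb0, rfl⟩
    exact ⟨k, by omega, hk⟩
  have hnn : ∀ b ∈ Finset.univ.erase (0 : B), 0 ≤ ((∑ i, chi (b.1 i)) ^ 2 - 16) := by
    intro b hb
    have hb0 : b.1 ≠ 0 := fun h => (Finset.ne_of_mem_erase hb) (Subtype.ext h)
    obtain ⟨k, hk4, hk⟩ := hform b.1 b.2 hb0
    rw [sum_chi, hk]
    push_cast
    rcases (by omega : k = 4 ∨ 5 ≤ k) with rfl | h
    · norm_num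
    · have : (5 : ℤ) ≤ k := by exact_mod_cast h
      nlinarith
  rw [Finset.sum_eq_zero_iff_of_nonneg hnn] at hE
  intro b hb
  by_cases hb0 : b = 0
  · exact Or.inl hb0
  right
  have := hE ⟨b, hb⟩ (Finset.mem_erase.2 ⟨fun h => hb0 (congrArg Subtype.val h), Finset.mem_univ _⟩)
  rw [sum_chi] at this
  push_cast at this
  have h3 : ((hammingNorm b : ℤ) - 16) * ((hammingNorm b : ℤ) - 20) = 0 := by linarith
  rcases mul_eq_zero.1 h3 with h | h
  · left; omega
  · right; omega

/-- the dual of the residue code has minimum distance at least 3 -/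
lemma dist_of_tor {C : Submodule (ZMod 4) (Fin 36 → ZMod 4)}
    (hsd : (C : Set (Fin 36 → ZMod 4)) = dualZ4 C)
    {B : Submodule (ZMod 2) (Fin 36 → ZMod 2)}
    (hB : (B : Set (Fin 36 → ZMod 2)) = residueCode C)
    (htor : HasMinWeight (torsionCode C) 3) :
    ∀ i j : Fin 36, i ≠ j → ∃ b ∈ B, b i ≠ b j := by
  intro i j hij
  by_contra! h
  have h1 : InL C (fun k => 2 * (if k = i ∨ k = j then 1 else 0)) := by
    apply two_mul_InL hsd hB
    intro b hb
    have : ∀ k, (((if k = i ∨ k = j then 1 else 0 : ℤ)) : ZMod 2) * b k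
        = (if k = i then b k else 0) + (if k = j then b k else 0) := by
      intro k
      by_cases h1 : k = i
      · subst h1; simp [hij]
      · by_cases h2 : k = j
        · subst h2; simp [h1]
        · simp [h1, h2]
    rw [Finset.sum_congr rfl (fun k _ => this k), Finset.sum_add_distrib]
    simp [h b hb, CharTwo.add_self_eq_zero]
  have h2 := htor.2 ⟨_, tor_iff h1, fun hz => by simpa using congrFun hz i, rfl⟩
  have h3 : hammingNorm (fun k : Fin 36 => (((if k = i ∨ k = j then 1 else 0 : ℤ)) : ZMod 2)) ≤ 2 := by
    unfold hammingNorm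
    refine (Finset.card_le_card (t := {i, j}) ?_).trans Finset.card_le_two
    intro k hk
    simp at hk
    simp; tauto
  omega

lemma parity_ne {a : ℤ} (h : (a : ZMod 2) ≠ 0) : a % 2 = 1 := by
  have := mt (dvd2_iff a).1 h
  omega

lemma weight_le_normsq {n : ℕ} (w : Fin n → ℤ) :
    (hammingNorm (fun i => (w i : ZMod 2)) : ℤ) ≤ ∑ i, w i * w i := by
  have : (hammingNorm (fun i => (w i : ZMod 2)) : ℤ)
      = ∑ i, if (w i : ZMod 2) ≠ 0 then 1 else 0 := hamming_sum _
  rw [this]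
  refine Finset.sum_le_sum fun i _ => ?_
  split_ifs with h
  · have := parity_ne h
    have h0 : w i ≠ 0 := by intro h; simp [h] at this
    have := mul_self_pos.2 h0
    omega
  · exact mul_self_nonneg _

/-- A torsion word lifts to a vector of lattice norm equal to its weight. -/
lemma tor_lift {n : ℕ} {C : Submodule (ZMod 4) (Fin n → ZMod 4)} {t : Fin n → ZMod 2}
    (ht : t ∈ torsionCode C) :
    ∃ y : Fin n → ℤ, InL C y ∧ (∑ i, y i * y i) = 4 * (hammingNorm t : ℤ) := by
  obtain ⟨c, hc, rfl⟩ := ht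
  obtain ⟨x, rfl⟩ := lift4 c
  rw [toBinary_lift]
  refine ⟨fun i => 2 * (x i % 2), ?_, ?_⟩
  · unfold InL
    convert hc using 2 with i
    simp only [Pi.smul_apply, smul_eq_mul]
    have : ((2 * (x i % 2) : ℤ) : ZMod 4) = ((2 * x i : ℤ) : ZMod 4) := by
      rw [ZMod.intCast_eq_intCast_iff]
      unfold Int.ModEq
      push_cast
      omega
    rw [this]; push_cast; rfl
  · have : (hammingNorm (fun i => (x i : ZMod 2)) : ℤ)
      = ∑ i, if (x i : ZMod 2) ≠ 0 then 1 else 0 := hamming_sum _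
    rw [this, Finset.mul_sum]
    refine Finset.sum_congr rfl fun i _ => ?_
    split_ifs with h
    · simp only [parity_ne h]; norm_num
    · have : x i % 2 = 0 := by have := (dvd2_iff (x i)).2 (by simpa using h); omega
      simp only [this]; norm_num

lemma min_ge {C : Submodule (ZMod 4) (Fin 36 → ZMod 4)}
    {B : Submodule (ZMod 2) (Fin 36 → ZMod 2)}
    (hB : (B : Set (Fin 36 → ZMod 2)) = residueCode C)
    (hmin : HasMinWeight (B : Set (Fin 36 → ZMod 2)) 16)
    (htor : HasMinWeight (torsionCode C) 3)
    {x : Fin 36 → ℤ} (hx : InL C x) (hx0 : x ≠ 0) : 12 ≤ ∑ i, x i * x i := by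
  by_cases h : (fun i => (x i : ZMod 2)) = 0
  · have h2 : ∀ i, (2 : ℤ) ∣ x i := fun i => (dvd2_iff _).2 (congrFun h i)
    choose t ht using h2
    obtain rfl : x = fun i => 2 * t i := funext ht
    have h4 : ∑ i, 2 * t i * (2 * t i) = 4 * ∑ i, t i * t i := by
      rw [Finset.mul_sum]; exact Finset.sum_congr rfl fun i _ => by ring
    rw [h4]
    by_cases h' : (fun i => (t i : ZMod 2)) = 0
    · obtain ⟨i, hi⟩ : ∃ i, t i ≠ 0 := by
        by_contra! hc
        exact hx0 (funext fun i => by simp [hc i])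
      obtain ⟨k, hk⟩ := (dvd2_iff _).2 (congrFun h' i)
      have hk0 : k ≠ 0 := by rintro rfl; simp at hk; exact hi hk
      have h1 := Finset.single_le_sum (f := fun i => t i * t i)
        (fun i _ => mul_self_nonneg (t i)) (Finset.mem_univ i)
      simp only [hk] at h1
      have := mul_self_pos.2 hk0
      nlinarith
    · have h1 := htor.2 ⟨_, tor_iff hx, h', rfl⟩
      have h2 := weight_le_normsq t
      omega
  · have h1 := hmin.2 ⟨_, res_mem hB hx, h, rfl⟩
    have h2 := weight_le_normsq x
    omega

lemma normsq_add {n : ℕ} (x y : Fin n → ℤ) : ∑ i, (x i + y i) * (x i + y i)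
    = (∑ i, x i * x i) + 2 * (∑ i, x i * y i) + ∑ i, y i * y i := by
  rw [Finset.mul_sum, ← Finset.sum_add_distrib, ← Finset.sum_add_distrib]
  exact Finset.sum_congr rfl fun i _ => by ring

lemma dot_add {n : ℕ} (w x y : Fin n → ℤ) : ∑ i, w i * (x i + y i)
    = (∑ i, w i * x i) + ∑ i, w i * y i := by
  rw [← Finset.sum_add_distrib]
  exact Finset.sum_congr rfl fun i _ => by ring

section
variable {n : ℕ} {C : Submodule (ZMod 4) (Fin n → ZMod 4)}

lemma mem_even {x : Fin n → ℤ} (hx : InL C x) (h : (8 : ℤ) ∣ ∑ i, x i * x i) :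
    vec x ∈ evenSublattice (constructionA4 C) := by
  obtain ⟨k, hk⟩ := h
  exact ⟨vec_mem hx, k, by rw [normOf_vec, hk]; push_cast; ring⟩

lemma even_dvd {x : Fin n → ℤ} (h : vec x ∈ evenSublattice (constructionA4 C)) :
    (8 : ℤ) ∣ ∑ i, x i * x i := by
  obtain ⟨-, m, hm⟩ := h
  rw [normOf_vec] at hm
  refine ⟨m, ?_⟩
  have : ((∑ i, x i * x i : ℤ) : ℝ) = ((8 * m : ℤ) : ℝ) := by push_cast at hm ⊢; linarith
  exact_mod_cast this

lemma inner_int_s1 {w x : Fin n → ℤ} (h : ∃ m : ℤ, ⟪vec w, vec x⟫ = (m : ℝ)) :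
    (4 : ℤ) ∣ ∑ i, w i * x i := by
  obtain ⟨m, hm⟩ := h
  rw [inner_vec] at hm
  refine ⟨m, ?_⟩
  have : ((∑ i, w i * x i : ℤ) : ℝ) = ((4 * m : ℤ) : ℝ) := by push_cast at hm ⊢; linarith
  exact_mod_cast this

lemma shadow_char (hsd : (C : Set (Fin n → ZMod 4)) = dualZ4 C)
    {y : Fin n → ℤ} (hy : InL C y) (hy12 : ∑ i, y i * y i = 12)
    {u : EuclideanSpace ℝ (Fin n)} (hu : u ∈ shadow (constructionA4 C)) :
    ∃ w, u = vec w ∧ ∀ x, InL C x → (8 : ℤ) ∣ (2 * ∑ i, w i * x i) - ∑ i, x i * x i := by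
  obtain ⟨hu1, hu2⟩ := hu
  obtain ⟨w, rfl⟩ := vec_of_int (fun j => hu1 _ (mem_even (InL.four j) (by simp)))
  refine ⟨w, rfl, ?_⟩
  have hE : ∀ x, InL C x → (8 : ℤ) ∣ ∑ i, x i * x i → (4 : ℤ) ∣ ∑ i, w i * x i :=
    fun x hx h8 => inner_int_s1 (hu1 _ (mem_even hx h8))
  have hadd : ∀ x, InL C x → ¬ (8 : ℤ) ∣ ∑ i, x i * x i →
      (4 : ℤ) ∣ (∑ i, w i * x i) + ∑ i, w i * y i := by
    intro x hx h8
    have h1 := hx.dvd hsd hx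
    have h2 := hx.dvd hsd hy
    have h3 := hE _ (hx.add hy) (by rw [normsq_add, hy12]; omega)
    rwa [dot_add] at h3
  have hyy : (4 : ℤ) ∣ 2 * ∑ i, w i * y i := by
    have h3 := hE _ (hy.add hy) (by rw [normsq_add, hy12]; norm_num)
    rw [dot_add] at h3
    omega
  have hn : ¬ (4 : ℤ) ∣ ∑ i, w i * y i := by
    intro h
    apply hu2
    refine vec_mem (InL_of_dvd hsd fun x hx => ?_)
    by_cases h8 : (8 : ℤ) ∣ ∑ i, x i * x i
    · exact hE x hx h8
    · have := hadd x hx h8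
      omega
  intro x hx
  have h1 := hx.dvd hsd hx
  by_cases h8 : (8 : ℤ) ∣ ∑ i, x i * x i
  · have := hE x hx h8
    omega
  · have := hadd x hx h8
    omega

lemma char_shadow (hsd : (C : Set (Fin n → ZMod 4)) = dualZ4 C)
    {y : Fin n → ℤ} (hy : InL C y) (hy12 : ∑ i, y i * y i = 12) {w : Fin n → ℤ}
    (h : ∀ x, InL C x → (8 : ℤ) ∣ (2 * ∑ i, w i * x i) - ∑ i, x i * x i) :
    vec w ∈ shadow (constructionA4 C) := by
  constructor
  · intro v hv
    obtain ⟨x, hx, rfl⟩ := mem_A4.1 hv.1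
    have h8 := even_dvd hv
    have := h x hx
    obtain ⟨k, hk⟩ : (4 : ℤ) ∣ ∑ i, w i * x i := by omega
    exact ⟨k, by rw [inner_vec, hk]; push_cast; ring⟩
  · intro hw
    have hw' := hw
    rw [unimod hsd] at hw'
    have h1 := inner_int_s1 (hw' _ (vec_mem hy))
    have := h y hy
    omega
end

lemma shadow_ge {C : Submodule (ZMod 4) (Fin 36 → ZMod 4)}
    (hsd : (C : Set (Fin 36 → ZMod 4)) = dualZ4 C)
    {B : Submodule (ZMod 2) (Fin 36 → ZMod 2)}
    (hB : (B : Set (Fin 36 → ZMod 2)) = residueCode C)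
    (hw : ∀ b ∈ B, b = 0 ∨ hammingNorm b = 16 ∨ hammingNorm b = 20)
    {w : Fin 36 → ℤ}
    (h : ∀ x, InL C x → (8 : ℤ) ∣ (2 * ∑ i, w i * x i) - ∑ i, x i * x i) :
    20 ≤ ∑ i, w i * w i := by
  have hmem : (fun i => ((w i + 1 : ℤ) : ZMod 2)) ∈ B := by
    apply double_dual
    intro t ht
    obtain ⟨s, rfl⟩ : ∃ s : Fin 36 → ℤ, (fun i => (s i : ZMod 2)) = t :=
      ⟨fun i => (t i).val, by ext i; simp⟩
    have h1 := h _ (two_mul_InL hsd hB ht)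
    have h2 : ∑ i, w i * (2 * s i) = 2 * ∑ i, w i * s i := by
      rw [Finset.mul_sum]; exact Finset.sum_congr rfl fun i _ => by ring
    have h4 : ∑ i, 2 * s i * (2 * s i) = 4 * ∑ i, s i * s i := by
      rw [Finset.mul_sum]; exact Finset.sum_congr rfl fun i _ => by ring
    rw [h2, h4] at h1
    have h5 : (2 : ℤ) ∣ (∑ i, w i * s i) - ∑ i, s i * s i := by omega
    have h6 : (2 : ℤ) ∣ ∑ i, s i * (w i + 1) := by
      have h7 : ∑ i, s i * (w i + 1) =
          ((∑ i, w i * s i) - ∑ i, s i * s i) + ∑ i, s i * (s i + 1) := by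
        rw [← Finset.sum_sub_distrib, ← Finset.sum_add_distrib]
        exact Finset.sum_congr rfl fun i _ => by ring
      rw [h7]
      exact dvd_add h5 (Finset.dvd_sum fun i _ => (Int.even_mul_succ_self (s i)).two_dvd)
    have := (dvd2_iff _).1 h6
    push_cast at this ⊢
    exact this
  obtain ⟨x, hx, hxb⟩ := exists_lift hB hmem
  have hpar : ∀ i, (w i - x i) % 2 = 1 := by
    intro i
    have := hxb i
    rw [ZMod.intCast_eq_intCast_iff] at this
    unfold Int.ModEq at this
    push_cast at this
    omega
  have h8 := char_mod8 x w hpar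
  have h8' := h x hx
  have hcomm : ∑ i, x i * w i = ∑ i, w i * x i := Finset.sum_congr rfl fun i _ => by ring
  rw [hcomm] at h8
  push_cast at h8
  have hle : hammingNorm (fun i => ((w i + 1 : ℤ) : ZMod 2)) ≤ 20 := by
    rcases hw _ hmem with h | h | h
    · rw [h]; simp
    · omega
    · omega
  have hsum : (hammingNorm (fun i => ((w i + 1 : ℤ) : ZMod 2)) : ℤ)
      + hammingNorm (fun i => (w i : ZMod 2)) = 36 := by
    rw [hamming_sum, hamming_sum, ← Finset.sum_add_distrib]
    have : ∀ a : ZMod 2, ((if a + 1 ≠ 0 then 1 else 0 : ℤ) + if a ≠ 0 then 1 else 0) = 1 := by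
      decide
    push_cast
    rw [Finset.sum_congr rfl fun i _ => this (w i)]
    simp
  have := weight_le_normsq w
  omega

lemma exists_char_s1 {C : Submodule (ZMod 4) (Fin 36 → ZMod 4)}
    (hsd : (C : Set (Fin 36 → ZMod 4)) = dualZ4 C)
    {B : Submodule (ZMod 2) (Fin 36 → ZMod 2)}
    (hB : (B : Set (Fin 36 → ZMod 2)) = residueCode C)
    (hmin : HasMinWeight (B : Set (Fin 36 → ZMod 2)) 16) :
    ∃ w : Fin 36 → ℤ, ∑ i, w i * w i = 20 ∧
      ∀ x, InL C x → (8 : ℤ) ∣ (2 * ∑ i, w i * x i) - ∑ i, x i * x i := by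
  obtain ⟨b₀, hb₀, hb₀0, hb₀16⟩ := hmin.1
  replace hb₀ : b₀ ∈ B := hb₀
  obtain ⟨x₀, hx₀, hx₀b⟩ := exists_lift hB hb₀
  -- the initial guess: indicator of the complement of the support
  set w₀ : Fin 36 → ℤ := fun i => if b₀ i = 0 then 1 else 0 with hw₀
  have hw₀20 : ∑ i, w₀ i * w₀ i = 20 := by
    have h1 : ∀ i, w₀ i * w₀ i = 1 - if b₀ i ≠ 0 then 1 else 0 := by
      intro i; simp only [hw₀]; split_ifs <;> simp_all
    rw [Finset.sum_congr rfl fun i _ => h1 i, Finset.sum_sub_distrib, ← hamming_sum, hb₀16]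
    simp
  have hpar₀ : ∀ x : Fin 36 → ℤ, (∀ i, (x i : ZMod 2) = b₀ i) → ∀ i, (w₀ i - x i) % 2 = 1 := by
    intro x hx i
    simp only [hw₀]
    split_ifs with h
    · have := (dvd2_iff (x i)).2 (by rw [hx, h]); omega
    · have := parity_ne (a := x i) (by rw [hx]; exact h); omega
  let F : (Fin 36 → ℤ) → ℤ := fun x => (2 * ∑ i, w₀ i * x i) - ∑ i, x i * x i
  have hF : ∀ x, F x = (2 * ∑ i, w₀ i * x i) - ∑ i, x i * x i := fun x => rfl
  -- `w₀ + x₀ ≡ 1 mod 2`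
  have hF4 : ∀ x, InL C x → (4 : ℤ) ∣ F x := by
    intro x hx
    have h1 := hx.dvd hsd hx
    have h2 := hx₀.dvd hsd hx
    have h3 : (2 : ℤ) ∣ ∑ i, ((w₀ i * x i - x₀ i * x i) + x i * x i) := by
      refine Finset.dvd_sum fun i _ => ?_
      have h := hpar₀ x₀ hx₀b i
      have : (w₀ i * x i - x₀ i * x i) + x i * x i
        = x i * (x i + 1) + x i * ((w₀ i - x₀ i) - 1) := by ring
      rw [this]
      exact dvd_add (Int.even_mul_succ_self (x i)).two_dvd (Dvd.dvd.mul_left (by omega) _)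
    rw [Finset.sum_add_distrib, Finset.sum_sub_distrib] at h3
    rw [hF]
    omega
  have hFadd : ∀ x y, InL C x → InL C y → (8 : ℤ) ∣ F (fun i => x i + y i) - F x - F y := by
    intro x y hx hy
    have := hx.dvd hsd hy
    rw [hF, hF x, hF y, dot_add, normsq_add]
    omega
  have hF0 : ∀ x, InL C x → (∀ i, (x i : ZMod 2) = 0) → (8 : ℤ) ∣ F x := by
    intro x hx h0
    have h2 : ∀ i, (2 : ℤ) ∣ x i := fun i => (dvd2_iff _).2 (h0 i)
    choose t ht using h2
    obtain rfl : x = fun i => 2 * t i := funext ht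
    have h2 : ∑ i, w₀ i * (2 * t i) = 2 * ∑ i, w₀ i * t i := by
      rw [Finset.mul_sum]; exact Finset.sum_congr rfl fun i _ => by ring
    have h4 : ∑ i, 2 * t i * (2 * t i) = 4 * ∑ i, t i * t i := by
      rw [Finset.mul_sum]; exact Finset.sum_congr rfl fun i _ => by ring
    have h5 : ∑ i, x₀ i * (2 * t i) = 2 * ∑ i, x₀ i * t i := by
      rw [Finset.mul_sum]; exact Finset.sum_congr rfl fun i _ => by ring
    have h6 := hx₀.dvd hsd hx
    rw [h5] at h6
    have h3 : (2 : ℤ) ∣ ∑ i, ((w₀ i * t i - x₀ i * t i) + t i * t i) := by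
      refine Finset.dvd_sum fun i _ => ?_
      have h := hpar₀ x₀ hx₀b i
      have : (w₀ i * t i - x₀ i * t i) + t i * t i
        = t i * (t i + 1) + t i * ((w₀ i - x₀ i) - 1) := by ring
      rw [this]
      exact dvd_add (Int.even_mul_succ_self (t i)).two_dvd (Dvd.dvd.mul_left (by omega) _)
    rw [Finset.sum_add_distrib, Finset.sum_sub_distrib] at h3
    rw [hF, h2, h4]
    omega
  have hFcongr : ∀ x y, InL C x → InL C y → (∀ i, (x i : ZMod 2) = y i) →
      (8 : ℤ) ∣ F x - F y := by
    intro x y hx hy hxy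
    have h1 := hF0 _ (hx.sub hy) (fun i => by push_cast; rw [hxy i, sub_self])
    have h2 := hFadd _ _ (hx.sub hy) hy
    change (8 : ℤ) ∣ F (fun i => x i - y i + y i) - F (fun i => x i - y i) - F y at h2
    have e : (fun i => x i - y i + y i) = x := by ext i; ring
    rw [e] at h2
    omega
  have hFb : ∀ x, InL C x → (∀ i, (x i : ZMod 2) = b₀ i) → (8 : ℤ) ∣ F x := by
    intro x hx hxb
    have := char_mod8 x w₀ (hpar₀ x hxb)
    have hcomm : ∑ i, x i * w₀ i = ∑ i, w₀ i * x i := Finset.sum_congr rfl fun i _ => by ring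
    rw [hcomm, hw₀20] at this
    push_cast at this
    rw [hF]
    omega
  -- the functional on `B`
  have hl : ∀ b : B, ∃ x, InL C x ∧ ∀ i, (x i : ZMod 2) = b.1 i := fun b => exists_lift hB b.2
  choose L hL hLb using hl
  have hpar8 : ∀ a b c : ℤ, (4 : ℤ) ∣ a → (4 : ℤ) ∣ b → (4 : ℤ) ∣ c → (8 : ℤ) ∣ a - b - c →
      ((a / 4 : ℤ) : ZMod 2) = ((b / 4 : ℤ) : ZMod 2) + ((c / 4 : ℤ) : ZMod 2) := by
    intro a b c ha hb hc h
    rw [← Int.cast_add, ZMod.intCast_eq_intCast_iff]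
    unfold Int.ModEq
    push_cast
    omega
  let g₀ : B →+ ZMod 2 := AddMonoidHom.mk' (fun b => ((F (L b) / 4 : ℤ) : ZMod 2)) (by
    intro a b
    apply hpar8 _ _ _ (hF4 _ (hL _)) (hF4 _ (hL _)) (hF4 _ (hL _))
    have h1 := hFadd _ _ (hL a) (hL b)
    have h2 := hFcongr _ _ (hL (a + b)) ((hL a).add (hL b)) (fun i => by
      push_cast
      rw [hLb, hLb, hLb]; rfl)
    omega)
  let g : B →ₗ[ZMod 2] ZMod 2 := g₀.toZModLinearMap 2
  have hg : ∀ b, g b = ((F (L b) / 4 : ℤ) : ZMod 2) := fun b => rfl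
  -- masked restriction
  let f : B →ₗ[ZMod 2] (Fin 36 → ZMod 2) :=
    { toFun := fun b i => b.1 i * (w₀ i : ZMod 2)
      map_add' := by intro a b; ext i; simp [add_mul]
      map_smul' := by intro a b; ext i; simp [mul_assoc] }
  have hgann : g ∈ f.ker.dualAnnihilator := by
    rw [Submodule.mem_dualAnnihilator]
    intro b hb
    have hb' : ∀ i, b.1 i * (w₀ i : ZMod 2) = 0 := fun i => congrFun (LinearMap.mem_ker.1 hb) i
    have hsub : ∀ i, b₀ i = 0 → b.1 i = 0 := by
      intro i hi
      have := hb' i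
      simpa [hw₀, hi] using this
    have h8 : (8 : ℤ) ∣ F (L b) := by
      by_cases hb0 : b.1 = 0
      · exact hF0 _ (hL b) (fun i => by rw [hLb, hb0]; rfl)
      · refine hFb _ (hL b) (fun i => ?_)
        rw [hLb]
        have h16 := hmin.2 ⟨b.1, b.2, hb0, rfl⟩
        have hs : Finset.univ.filter (fun i => b.1 i ≠ 0) ⊆ Finset.univ.filter (fun i => b₀ i ≠ 0) := by
          intro i hi
          simp only [Finset.mem_filter, Finset.mem_univ, true_and] at hi ⊢
          exact fun h => hi (hsub i h)
        have heq := Finset.eq_of_subset_of_card_le hs (by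
          change hammingNorm b₀ ≤ hammingNorm b.1
          omega)
        have hi : b.1 i ≠ 0 ↔ b₀ i ≠ 0 := by
          have := Finset.ext_iff.1 heq i
          simpa using this
        have : ∀ p q : ZMod 2, (p ≠ 0 ↔ q ≠ 0) → p = q := by decide
        exact this _ _ hi
    rw [hg, ← dvd2_iff]
    omega
  rw [← LinearMap.range_dualMap_eq_dualAnnihilator_ker] at hgann
  obtain ⟨φ, hφ⟩ := hgann
  have key : ∀ v, φ v = ∑ i, φ (Pi.single i 1) * v i := by
    intro v
    conv_lhs => rw [pi_eq_sum_univ' v]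
    simp [map_sum, mul_comm, Pi.single]
  let s : Fin 36 → ℤ := fun i => ((φ (Pi.single i 1)).val : ℤ)
  have hs : ∀ i, ((s i : ℤ) : ZMod 2) = φ (Pi.single i 1) := fun i => by simp [s]
  have hs01 : ∀ i, s i = 0 ∨ s i = 1 := by
    intro i
    have := ZMod.val_lt (φ (Pi.single i 1))
    simp only [s]
    omega
  refine ⟨fun i => w₀ i * (1 - 2 * s i), ?_, ?_⟩
  · rw [← hw₀20]
    refine Finset.sum_congr rfl fun i _ => ?_
    rcases hs01 i with h | h <;> simp only [h] <;> ring
  · intro x hx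
    have hxB := res_mem hB hx
    let b : B := ⟨_, hxB⟩
    have h1 : g b = ∑ i, (s i : ZMod 2) * ((x i : ZMod 2) * (w₀ i : ZMod 2)) := by
      rw [← hφ, LinearMap.dualMap_apply, key]
      refine Finset.sum_congr rfl fun i _ => ?_
      rw [hs]; rfl
    have h2 := hFcongr _ _ (hL b) hx (fun i => by rw [hLb])
    have h3 := hF4 _ hx
    have h4 := hF4 _ (hL b)
    rw [hg] at h1
    have h5 : (((F (L b) / 4) - ∑ i, s i * (x i * w₀ i) : ℤ) : ZMod 2) = 0 := by
      push_cast; rw [h1]; simp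
    rw [← dvd2_iff] at h5
    have h6 : (2 * ∑ i, w₀ i * (1 - 2 * s i) * x i) - ∑ i, x i * x i
        = F x - 4 * ∑ i, s i * (x i * w₀ i) := by
      have : ∑ i, w₀ i * (1 - 2 * s i) * x i
          = (∑ i, w₀ i * x i) - 2 * ∑ i, s i * (x i * w₀ i) := by
        rw [Finset.mul_sum, ← Finset.sum_sub_distrib]
        exact Finset.sum_congr rfl fun i _ => by ring
      rw [hF, this]; ring
    rw [h6]
    omega

theorem constructionA4_length36 {C : Submodule (ZMod 4) (Fin 36 → ZMod 4)}
    (hsd : (C : Set (Fin 36 → ZMod 4)) = dualZ4 C)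
    (hres : ∃ B : Submodule (ZMod 2) (Fin 36 → ZMod 2),
      (B : Set (Fin 36 → ZMod 2)) = residueCode C ∧
      Module.finrank (ZMod 2) B = 6 ∧ IsDoublyEven B ∧
      HasMinWeight (B : Set (Fin 36 → ZMod 2)) 16)
    (htor : HasMinWeight (torsionCode C) 3) :
    IsUnimodularLattice (constructionA4 C) ∧ IsOddLattice (constructionA4 C) ∧
      HasMinNorm (constructionA4 C) 3 ∧ HasSigma (constructionA4 C) 20 := by
  obtain ⟨B, hB, hr, hde, hmin⟩ := hres
  obtain ⟨t, ht, ht0, ht3⟩ := htor.1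
  obtain ⟨y, hy, hy12⟩ := tor_lift ht
  rw [ht3] at hy12
  norm_num at hy12
  have hynorm : normOf (vec y) = 3 := by rw [normOf_vec, hy12]; norm_num
  refine ⟨unimod hsd, ⟨vec y, vec_mem hy, 3, by decide, by rw [hynorm]; norm_num⟩, ⟨?_, ?_⟩, ?_⟩
  · refine ⟨vec y, vec_mem hy, ?_, hynorm⟩
    intro h
    rw [h] at hynorm
    simp [normOf] at hynorm
  · rintro r ⟨v, hv, hv0, rfl⟩
    obtain ⟨x, hx, rfl⟩ := mem_A4.1 hv
    have hx0 : x ≠ 0 := by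
      rintro rfl
      apply hv0
      ext i
      simp [vec]
    have h12 : ((12 : ℤ) : ℝ) ≤ ((∑ i, x i * x i : ℤ) : ℝ) := by
      exact_mod_cast min_ge hB hmin htor hx hx0
    rw [normOf_vec]
    push_cast at h12 ⊢
    linarith
  · refine ⟨5, ⟨?_, ?_⟩, by norm_num⟩
    · obtain ⟨w, hw20, hw⟩ := exists_char_s1 hsd hB hmin
      exact ⟨vec w, char_shadow hsd hy hy12 hw, by rw [normOf_vec, hw20]; norm_num⟩
    · rintro r ⟨u, hu, rfl⟩
      obtain ⟨w, rfl, hw⟩ := shadow_char hsd hy hy12 hu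
      have h20 : ((20 : ℤ) : ℝ) ≤ ((∑ i, w i * w i : ℤ) : ℝ) := by
        exact_mod_cast shadow_ge hsd hB
          (weights B hr hde hmin (dist_of_tor hsd hB htor)) hw
      rw [normOf_vec]
      push_cast at h20 ⊢
      linarith
end
end
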